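/- arXiv:2506.19003 — 15 statements merged into one kernel-verified Lean document; each statement's English description precedes it below -/
import Mathlib

section
/- For the phase-space ODE system, the function N(t) = √(1 + x(t)² + y(t)²) is differentiable with N'(t) = ε(t)·y(t) for every t. Consequently, if ε(t) ≥ 0 for all t and y(t) ≤ 0 for all t in an interval [a,b] with a ≤ b, then N(b) ≤ N(a) (the squeezing parameter cannot increase while the trajectory is in the lower half-plane). -/
/-- For the phase-space ODE system, `N(t) = √(1 + x(t)² + y(t)²)` is
differentiable with `N'(t) = ε(t)·y(t)`; consequently, if `ε ≥ 0` everywhere and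
`y ≤ 0` on `[a,b]` with `a ≤ b`, then `N(b) ≤ N(a)`. -/
theorem cosh_nonincreasing_in_lower_half_plane
    (ω : ℝ) (hω : 0 < ω) (ε x y : ℝ → ℝ) (hε : Continuous ε)
    (hx : ∀ t, HasDerivAt x (-(2 * ω - ε t) * y t) t)
    (hy : ∀ t, HasDerivAt y ((2 * ω - ε t) * x t
      + ε t * Real.sqrt (1 + (x t) ^ 2 + (y t) ^ 2)) t) :
    (∀ t, HasDerivAt (fun s => Real.sqrt (1 + (x s) ^ 2 + (y s) ^ 2)) (ε t * y t) t)
    ∧ (∀ a b : ℝ, a ≤ b → (∀ t, 0 ≤ ε t) → (∀ t ∈ Set.Icc a b, y t ≤ 0) →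
        Real.sqrt (1 + (x b) ^ 2 + (y b) ^ 2) ≤ Real.sqrt (1 + (x a) ^ 2 + (y a) ^ 2)) := by
  have key : ∀ t, HasDerivAt (fun s => Real.sqrt (1 + (x s) ^ 2 + (y s) ^ 2)) (ε t * y t) t := by
    intro t
    have hpos : 0 < 1 + (x t) ^ 2 + (y t) ^ 2 := by positivity
    have hs : 0 < Real.sqrt (1 + (x t) ^ 2 + (y t) ^ 2) := Real.sqrt_pos.mpr hpos
    have h1 : HasDerivAt (fun s => 1 + (x s) ^ 2 + (y s) ^ 2) _ t :=
      (((hx t).pow 2).const_add 1).add ((hy t).pow 2)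
    have h2 := h1.sqrt hpos.ne'
    refine h2.congr_deriv ?_
    rw [div_eq_iff (by positivity)]
    push_cast
    ring
  refine ⟨key, ?_⟩
  intro a b hab he hyn
  have hanti : AntitoneOn (fun s => Real.sqrt (1 + (x s) ^ 2 + (y s) ^ 2)) (Set.Icc a b) := by
    apply antitoneOn_of_deriv_nonpos (convex_Icc a b)
    · exact fun t _ => (key t).continuousAt.continuousWithinAt
    · exact fun t _ => (key t).differentiableAt.differentiableWithinAt
    · intro t ht
      rw [(key t).deriv]
      exact mul_nonpos_of_nonneg_of_nonpos (he t) (hyn t (interior_subset ht))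
  exact hanti (Set.left_mem_Icc.mpr hab) (Set.right_mem_Icc.mpr hab) hab
end

section
/- For the phase-space ODE system, the function M(t) = x(t) + √(1 + x(t)² + y(t)²) is differentiable with M'(t) = −2(ω − ε(t))·y(t) for every t. Consequently, if ε(t) ≤ ω for all t and y(t) ≥ 0 for all t in an interval [a,b] with a ≤ b, then M(b) ≤ M(a). -/
/-- For the phase-space ODE system, `M(t) = x(t) + √(1 + x(t)² + y(t)²)` is
differentiable with `M'(t) = −2(ω − ε(t))·y(t)`; consequently, if `ε(t) ≤ ω` for all `t`
and `y ≥ 0` on `[a,b]` with `a ≤ b`, then `M(b) ≤ M(a)`. -/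
theorem M_nonincreasing_in_upper_half_plane
    (ω : ℝ) (hω : 0 < ω) (ε x y : ℝ → ℝ) (hε : Continuous ε)
    (hx : ∀ t, HasDerivAt x (-(2 * ω - ε t) * y t) t)
    (hy : ∀ t, HasDerivAt y ((2 * ω - ε t) * x t
      + ε t * Real.sqrt (1 + (x t) ^ 2 + (y t) ^ 2)) t) :
    (∀ t, HasDerivAt (fun s => x s + Real.sqrt (1 + (x s) ^ 2 + (y s) ^ 2))
        (-2 * (ω - ε t) * y t) t)
    ∧ (∀ a b : ℝ, a ≤ b → (∀ t, ε t ≤ ω) → (∀ t ∈ Set.Icc a b, 0 ≤ y t) →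
        x b + Real.sqrt (1 + (x b) ^ 2 + (y b) ^ 2)
          ≤ x a + Real.sqrt (1 + (x a) ^ 2 + (y a) ^ 2)) := by
  have hM : ∀ t, HasDerivAt (fun s => x s + Real.sqrt (1 + (x s) ^ 2 + (y s) ^ 2))
      (-2 * (ω - ε t) * y t) t := by
    intro t
    have hpos : 0 < 1 + (x t) ^ 2 + (y t) ^ 2 := by positivity
    have hS : 0 < Real.sqrt (1 + (x t) ^ 2 + (y t) ^ 2) := Real.sqrt_pos.mpr hpos
    have h1 := (((hx t).fun_pow 2).const_add 1).fun_add ((hy t).fun_pow 2)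
    have h2 := (hx t).fun_add (h1.sqrt hpos.ne')
    refine h2.congr_deriv ?_
    generalize Real.sqrt (1 + (x t) ^ 2 + (y t) ^ 2) = S at hS
    field_simp
    norm_num
    ring
  refine ⟨hM, ?_⟩
  intro a b hab he hy0
  have hanti : AntitoneOn (fun s => x s + Real.sqrt (1 + (x s) ^ 2 + (y s) ^ 2))
      (Set.Icc a b) := by
    apply antitoneOn_of_deriv_nonpos (convex_Icc a b)
    · exact fun t _ => (hM t).continuousAt.continuousWithinAt
    · exact fun t _ => (hM t).differentiableAt.differentiableWithinAt
    · intro t ht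
      rw [(hM t).deriv]
      have h1 := hy0 t (interior_subset ht)
      have h2 := mul_nonneg (sub_nonneg.mpr (he t)) h1
      linarith
  exact hanti (Set.left_mem_Icc.mpr hab) (Set.right_mem_Icc.mpr hab) hab
end

section
/- For the phase-space ODE system with admissible control (0 ≤ ε(t) ≤ ω for all t): if y(t₀) = 0 and y(t) ≥ 0 for all t ∈ [t₀, t₀ + δ] for some δ ≥ 0, then y(t₀ + δ) ≤ ω·δ·(x(t₀) + √(1 + x(t₀)²)). -/
/-- For the phase-space ODE system with admissible control
(`0 ≤ ε(t) ≤ ω` for all `t`): if `y(t₀) = 0` and `y(t) ≥ 0` for all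
`t ∈ [t₀, t₀ + δ]` with `δ ≥ 0`, then `y(t₀ + δ) ≤ ω·δ·(x(t₀) + √(1 + x(t₀)²))`. -/
theorem y_linear_growth_bound
    (ω : ℝ) (hω : 0 < ω) (ε x y : ℝ → ℝ) (hε : Continuous ε)
    (hadm : ∀ t, 0 ≤ ε t ∧ ε t ≤ ω)
    (hx : ∀ t, HasDerivAt x (-(2 * ω - ε t) * y t) t)
    (hy : ∀ t, HasDerivAt y ((2 * ω - ε t) * x t
      + ε t * Real.sqrt (1 + (x t) ^ 2 + (y t) ^ 2)) t)
    (t₀ δ : ℝ) (hδ : 0 ≤ δ) (hy0 : y t₀ = 0)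
    (hynn : ∀ t ∈ Set.Icc t₀ (t₀ + δ), 0 ≤ y t) :
    y (t₀ + δ) ≤ ω * δ * (x t₀ + Real.sqrt (1 + (x t₀) ^ 2)) := by
  have hCpos : ∀ t, 0 < 1 + (x t) ^ 2 + (y t) ^ 2 := fun t => by positivity
  have hC : ∀ t, HasDerivAt (fun t => x t + Real.sqrt (1 + (x t) ^ 2 + (y t) ^ 2))
      (-(2 * (ω - ε t)) * y t) t := by
    intro t
    have hs := Real.sqrt_pos.mpr (hCpos t)
    have h1 := ((((hx t).pow 2).const_add 1).add ((hy t).pow 2)).sqrt (hCpos t).ne'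
    have h2 := (hx t).add h1
    refine h2.congr_deriv ?_
    simp only [Pi.add_apply, Pi.pow_apply]
    field_simp
    ring
  have hK : AntitoneOn (fun t => x t + Real.sqrt (1 + (x t) ^ 2 + (y t) ^ 2))
      (Set.Icc t₀ (t₀ + δ)) := by
    apply antitoneOn_of_deriv_nonpos (convex_Icc _ _)
    · exact fun t _ => (hC t).continuousAt.continuousWithinAt
    · exact fun t _ => (hC t).differentiableAt.differentiableWithinAt
    · intro t ht
      rw [(hC t).deriv]
      have h1 := hynn t (interior_subset ht)
      have h2 := (hadm t).2
      nlinarith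
  have h0 : t₀ ∈ Set.Icc t₀ (t₀ + δ) := ⟨le_refl _, by linarith⟩
  have h1 : t₀ + δ ∈ Set.Icc t₀ (t₀ + δ) := ⟨by linarith, le_refl _⟩
  set K := x t₀ + Real.sqrt (1 + (x t₀) ^ 2) with hKdef
  have hz : ∀ t, HasDerivAt (fun t => y t - ω * K * t) ((2 * ω - ε t) * x t
      + ε t * Real.sqrt (1 + (x t) ^ 2 + (y t) ^ 2) - ω * K) t := by
    intro t
    have h := (hy t).sub ((hasDerivAt_id t).const_mul (ω * K))
    exact h.congr_deriv (by ring)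
  have hZ : AntitoneOn (fun t => y t - ω * K * t) (Set.Icc t₀ (t₀ + δ)) := by
    apply antitoneOn_of_deriv_nonpos (convex_Icc _ _)
    · exact fun t _ => (hz t).continuousAt.continuousWithinAt
    · exact fun t _ => (hz t).differentiableAt.differentiableWithinAt
    · intro t ht
      rw [(hz t).deriv]
      have ht' := interior_subset ht
      have hle := hK h0 ht' ht'.1
      have hx_le : x t ≤ Real.sqrt (1 + (x t) ^ 2 + (y t) ^ 2) :=
        Real.le_sqrt_of_sq_le (by nlinarith [sq_nonneg (y t)])
      have h0' : x t + Real.sqrt (1 + (x t) ^ 2 + (y t) ^ 2) ≤ K := by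
        simpa [hy0, hKdef] using hle
      have e2 := (hadm t).2
      nlinarith [mul_nonneg (sub_nonneg.mpr e2) (sub_nonneg.mpr hx_le),
        mul_nonneg hω.le (sub_nonneg.mpr h0')]
  have := hZ h0 h1 h1.1
  simp only [hy0] at this
  linarith
end

section
/- (Paper's Lemma 1, single-winding growth bound.) For the phase-space ODE system with admissible control (0 ≤ ε(t) ≤ ω for all t): suppose t₀ ≤ s ≤ t₁, y(t₀) = 0, y(t) ≥ 0 for all t ∈ [t₀, s], and y(t) ≤ 0 for all t ∈ [s, t₁] (one excursion into the upper half-plane followed by a stretch in the lower half-plane, i.e., at most one winding). Then √(1 + x(t₁)² + y(t₁)²) ≤ (1 + ω²(t₁ − t₀)²)·√(1 + x(t₀)²); equivalently, cosh(2r(t₁)) ≤ (ω²Δ² + 1)·cosh(2r(t₀)) with Δ = t₁ − t₀. -/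
theorem le_of_hasDerivAt_nonpos_aux (f f' : ℝ → ℝ) (a b : ℝ) (hab : a ≤ b)
    (hf : ∀ t, HasDerivAt f (f' t) t) (hn : ∀ t ∈ Set.Icc a b, f' t ≤ 0) : f b ≤ f a := by
  have hanti : AntitoneOn f (Set.Icc a b) := by
    apply antitoneOn_of_deriv_nonpos (convex_Icc a b)
    · exact fun t _ => (hf t).continuousAt.continuousWithinAt
    · exact fun t _ => (hf t).differentiableAt.differentiableWithinAt
    · intro t ht
      rw [(hf t).deriv]
      exact hn t (interior_subset ht)
  exact hanti (Set.left_mem_Icc.2 hab) (Set.right_mem_Icc.2 hab) hab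

/-- Paper's Lemma 1, single-winding growth bound: for the phase-space ODE
system with admissible control (`0 ≤ ε(t) ≤ ω`), if `t₀ ≤ s ≤ t₁`, `y(t₀) = 0`,
`y ≥ 0` on `[t₀, s]` and `y ≤ 0` on `[s, t₁]`, then
`√(1 + x(t₁)² + y(t₁)²) ≤ (1 + ω²(t₁ − t₀)²)·√(1 + x(t₀)²)`. -/
theorem single_winding_growth_bound
    (ω : ℝ) (hω : 0 < ω) (ε x y : ℝ → ℝ) (hε : Continuous ε)
    (hadm : ∀ t, 0 ≤ ε t ∧ ε t ≤ ω)
    (hx : ∀ t, HasDerivAt x (-(2 * ω - ε t) * y t) t)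
    (hy : ∀ t, HasDerivAt y ((2 * ω - ε t) * x t
      + ε t * Real.sqrt (1 + (x t) ^ 2 + (y t) ^ 2)) t)
    (t₀ s t₁ : ℝ) (h₀s : t₀ ≤ s) (hs₁ : s ≤ t₁) (hy0 : y t₀ = 0)
    (hupper : ∀ t ∈ Set.Icc t₀ s, 0 ≤ y t)
    (hlower : ∀ t ∈ Set.Icc s t₁, y t ≤ 0) :
    Real.sqrt (1 + (x t₁) ^ 2 + (y t₁) ^ 2)
      ≤ (1 + ω ^ 2 * (t₁ - t₀) ^ 2) * Real.sqrt (1 + (x t₀) ^ 2) := by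
  set C : ℝ → ℝ := fun t => Real.sqrt (1 + (x t) ^ 2 + (y t) ^ 2) with hC
  have hCpos : ∀ t, 0 < C t := fun t => Real.sqrt_pos.2 (by positivity)
  have hCsq : ∀ t, C t ^ 2 = 1 + (x t) ^ 2 + (y t) ^ 2 := fun t => Real.sq_sqrt (by positivity)
  have hy' : ∀ t, HasDerivAt y ((2 * ω - ε t) * x t + ε t * C t) t := hy
  have hC' : ∀ t, HasDerivAt C (ε t * y t) t := by
    intro t
    have h1 := ((((hx t).pow 2).const_add 1).add ((hy' t).pow 2)).sqrt
      (by simp only [Pi.add_apply, Pi.pow_apply]; positivity)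
    have hne : Real.sqrt (1 + (x t) ^ 2 + (y t) ^ 2) ≠ 0 := (hCpos t).ne'
    refine h1.congr_deriv ?_
    simp only [Pi.add_apply, Pi.pow_apply]
    rw [div_eq_iff (mul_ne_zero two_ne_zero hne)]
    change _ = ε t * y t * (2 * C t)
    push_cast
    ring
  have hCx : ∀ t, x t ≤ C t := fun t => Real.le_sqrt_of_sq_le (by nlinarith [sq_nonneg (y t)])
  have hC0 : Real.sqrt (1 + (x t₀) ^ 2) = C t₀ := by simp [hC, hy0]
  rw [hC0]
  change C t₁ ≤ _
  have hlow : C t₁ ≤ C s := le_of_hasDerivAt_nonpos_aux C _ s t₁ hs₁ hC'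
    (fun t ht => mul_nonpos_of_nonneg_of_nonpos (hadm t).1 (hlower t ht))
  have hv : ∀ t ∈ Set.Icc t₀ s, x t + C t ≤ x t₀ + C t₀ := by
    intro t ht
    refine le_of_hasDerivAt_nonpos_aux (fun t => x t + C t) _ t₀ t ht.1
      (fun r => (hx r).add (hC' r)) ?_
    intro r hr
    have hyr := hupper r ⟨hr.1, hr.2.trans ht.2⟩
    nlinarith [mul_nonneg (sub_nonneg.2 (hadm r).2) hyr]
  have hyb : ∀ t ∈ Set.Icc t₀ s, y t ≤ ω * (x t₀ + C t₀) * (t - t₀) := by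
    intro t ht
    have := le_of_hasDerivAt_nonpos_aux (fun t => y t - ω * (x t₀ + C t₀) * (t - t₀)) _ t₀ t ht.1
      (fun r => (hy' r).sub (((hasDerivAt_id r).sub_const t₀).const_mul (ω * (x t₀ + C t₀)))) ?_
    · simp only [hy0, sub_self, mul_zero] at this
      linarith
    intro r hr
    have h1 := hv r ⟨hr.1, hr.2.trans ht.2⟩
    nlinarith [mul_nonneg (sub_nonneg.2 (hadm r).2) (sub_nonneg.2 (hCx r)),
      mul_le_mul_of_nonneg_left h1 hω.le]
  have hCs : C s ≤ C t₀ + ω ^ 2 * (x t₀ + C t₀) / 2 * (s - t₀) ^ 2 := by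
    have := le_of_hasDerivAt_nonpos_aux
      (fun t => C t - ω ^ 2 * (x t₀ + C t₀) / 2 * (t - t₀) ^ 2)
      (fun t => ε t * y t - ω ^ 2 * (x t₀ + C t₀) * (t - t₀)) t₀ s h₀s ?_ ?_
    · simp only [sub_self] at this
      linarith
    · intro r
      refine ((hC' r).sub ((((hasDerivAt_id r).sub_const t₀).pow 2).const_mul
        (ω ^ 2 * (x t₀ + C t₀) / 2))).congr_deriv ?_
      simp
      ring
    · intro r hr
      have h1 := mul_le_mul_of_nonneg_left (hyb r hr) hω.le
      have h2 := mul_le_mul_of_nonneg_right (hadm r).2 (hupper r hr)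
      nlinarith
  have h1 : ω ^ 2 * (x t₀ + C t₀) / 2 * (s - t₀) ^ 2 ≤ ω ^ 2 * C t₀ * (s - t₀) ^ 2 := by
    have : ω ^ 2 * (x t₀ + C t₀) / 2 ≤ ω ^ 2 * C t₀ := by
      nlinarith [mul_le_mul_of_nonneg_left (hCx t₀) (sq_nonneg ω)]
    exact mul_le_mul_of_nonneg_right this (sq_nonneg _)
  have h2 : ω ^ 2 * C t₀ * (s - t₀) ^ 2 ≤ ω ^ 2 * C t₀ * (t₁ - t₀) ^ 2 :=
    mul_le_mul_of_nonneg_left (pow_le_pow_left₀ (by linarith) (by linarith) 2)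
      (mul_nonneg (sq_nonneg _) (hCpos _).le)
  linarith
end

section
/- (Theorem 1, ODE form: squeezing bound at fixed winding number.) For the phase-space ODE system with admissible control (0 ≤ ε(t) ≤ ω), suppose x(0) = y(0) = 0 and let T ≥ 0, n ∈ ℕ. Suppose there is a partition 0 = s₀ ≤ s₁ ≤ … ≤ s_{2m} = T with m ≤ n + 1 such that for each i, y(t) ≥ 0 for all t ∈ [s_{2i}, s_{2i+1}] and y(t) ≤ 0 for all t ∈ [s_{2i+1}, s_{2i+2}] (the trajectory makes at most n+1 excursions into the upper half-plane, i.e., its winding number is at most n). Then √(1 + x(T)² + y(T)²) ≤ (ω²T²/(n+1) + 1)^{n+1}; in particular the squeezing parameter satisfies sinh(2r(T)) ≤ (ω²T²/(n+1) + 1)^{n+1}. -/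
/-- A function with nonpositive derivative on `[a,b]` does not exceed its initial value. -/
lemma le_initial_of_deriv_nonpos (f f' : ℝ → ℝ) (a b : ℝ)
    (hf : ∀ t, HasDerivAt f (f' t) t) (h : ∀ t ∈ Set.Icc a b, f' t ≤ 0) :
    ∀ t ∈ Set.Icc a b, f t ≤ f a := by
  have hanti : AntitoneOn f (Set.Icc a b) := by
    apply antitoneOn_of_deriv_nonpos (convex_Icc a b)
    · exact fun t _ => (hf t).continuousAt.continuousWithinAt
    · exact fun t _ => (hf t).differentiableAt.differentiableWithinAt
    · intro t ht
      rw [(hf t).deriv]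
      exact h t (interior_subset ht)
  intro t ht
  exact hanti ⟨le_refl a, ht.1.trans ht.2⟩ ht ht.1

/-- Growth over one excursion into the upper half-plane. -/
lemma upper_block (ω : ℝ) (hω : 0 < ω) (ε x y z : ℝ → ℝ)
    (hadm : ∀ t, 0 ≤ ε t ∧ ε t ≤ ω)
    (hx : ∀ t, HasDerivAt x (-(2 * ω - ε t) * y t) t)
    (hy : ∀ t, HasDerivAt y ((2 * ω - ε t) * x t + ε t * z t) t)
    (hz : ∀ t, HasDerivAt z (ε t * y t) t) (hxz : ∀ t, x t ≤ z t)
    (a b : ℝ) (hab : a ≤ b) (hya : y a = 0) (hpos : ∀ t ∈ Set.Icc a b, 0 ≤ y t) :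
    z b ≤ z a * (1 + ω ^ 2 * (b - a) ^ 2) := by
  have h1 : ∀ t ∈ Set.Icc a b, z t + x t ≤ z a + x a := by
    apply le_initial_of_deriv_nonpos (fun t => z t + x t) _ a b (fun t => (hz t).add (hx t))
    intro t ht
    nlinarith [hpos t ht, (hadm t).2]
  have h2 : ∀ t ∈ Set.Icc a b, y t ≤ ω * (z a + x a) * (t - a) := by
    have := le_initial_of_deriv_nonpos (fun t => y t - ω * (z a + x a) * (t - a)) _ a b
      (fun t => (hy t).sub (((hasDerivAt_id t).sub_const a).const_mul (ω * (z a + x a)))) ?_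
    · intro t ht
      have := this t ht
      simp only [hya, sub_self, mul_zero] at this
      linarith
    · intro t ht
      have e1 := mul_le_mul_of_nonneg_left (h1 t ht) hω.le
      have e2 := mul_le_mul_of_nonneg_right (hadm t).2 (sub_nonneg.2 (hxz t))
      linarith
  have h3 := le_initial_of_deriv_nonpos
      (fun t => z t - ω * (ω * (z a + x a)) / 2 * (t - a) ^ 2) _ a b
      (fun t => (hz t).sub ((((hasDerivAt_id t).sub_const a).pow 2).const_mul
        (ω * (ω * (z a + x a)) / 2))) ?_ b ⟨hab, le_refl b⟩
  · simp only [sub_self] at h3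
    have e : ω ^ 2 * (b - a) ^ 2 * (x a) ≤ ω ^ 2 * (b - a) ^ 2 * z a :=
      mul_le_mul_of_nonneg_left (hxz a) (by positivity)
    nlinarith
  · intro t ht
    have e1 := mul_le_mul_of_nonneg_left (h2 t ht) hω.le
    have e2 := mul_le_mul_of_nonneg_right (hadm t).2 (hpos t ht)
    simp only [id]
    norm_num
    linarith

/-- Theorem 1, ODE form: for the phase-space ODE system with admissible
control, starting at the origin, if the trajectory makes at most `n+1` excursions into the
upper half-plane up to time `T` (winding number at most `n`), then
`√(1 + x(T)² + y(T)²) ≤ (ω²T²/(n+1) + 1)^{n+1}`. -/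
theorem squeezing_bound_fixed_winding
    (ω : ℝ) (hω : 0 < ω) (ε x y : ℝ → ℝ) (hε : Continuous ε)
    (hadm : ∀ t, 0 ≤ ε t ∧ ε t ≤ ω)
    (hx : ∀ t, HasDerivAt x (-(2 * ω - ε t) * y t) t)
    (hy : ∀ t, HasDerivAt y ((2 * ω - ε t) * x t
      + ε t * Real.sqrt (1 + (x t) ^ 2 + (y t) ^ 2)) t)
    (hx0 : x 0 = 0) (hy0 : y 0 = 0)
    (T : ℝ) (hT : 0 ≤ T) (n : ℕ)
    (m : ℕ) (hm : m ≤ n + 1) (s : ℕ → ℝ)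
    (hs0 : s 0 = 0) (hsT : s (2 * m) = T)
    (hmono : ∀ i < 2 * m, s i ≤ s (i + 1))
    (hupper : ∀ i < m, ∀ t ∈ Set.Icc (s (2 * i)) (s (2 * i + 1)), 0 ≤ y t)
    (hlower : ∀ i < m, ∀ t ∈ Set.Icc (s (2 * i + 1)) (s (2 * i + 2)), y t ≤ 0) :
    Real.sqrt (1 + (x T) ^ 2 + (y T) ^ 2)
      ≤ (ω ^ 2 * T ^ 2 / (n + 1) + 1) ^ (n + 1) := by
  set z : ℝ → ℝ := fun t => Real.sqrt (1 + (x t) ^ 2 + (y t) ^ 2) with hzdef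
  have hzpos : ∀ t, 0 < z t := fun t => Real.sqrt_pos.2 (by positivity)
  have hz : ∀ t, HasDerivAt z (ε t * y t) t := by
    intro t
    have h := ((((hx t).pow 2).const_add 1).add ((hy t).pow 2)).sqrt
      (show (1 + (x t) ^ 2 + (y t) ^ 2) ≠ 0 by positivity)
    refine h.congr_deriv ?_
    have hp := hzpos t
    have hs : Real.sqrt (1 + (x t) ^ 2 + (y t) ^ 2) = z t := rfl
    simp only [Pi.add_apply, Pi.pow_apply, hs]
    field_simp
    norm_num
    ring
  have hxz : ∀ t, x t ≤ z t := fun t => Real.le_sqrt_of_sq_le (by nlinarith [sq_nonneg (y t)])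
  have hz0 : z 0 = 1 := by simp [hzdef, hx0, hy0]
  set c : ℝ := ω ^ 2 * T ^ 2 / (n + 1) + 1 with hc
  have hc1 : 1 ≤ c := by
    have : 0 ≤ ω ^ 2 * T ^ 2 / ((n : ℝ) + 1) := by positivity
    linarith
  have hc0 : 0 < c := by linarith
  have key : ∀ k ≤ m, 0 ≤ s (2 * k) ∧ y (s (2 * k)) * (m - k) = 0 ∧
      z (s (2 * k)) ≤ c ^ k * Real.exp ((ω ^ 2 * (s (2 * k)) ^ 2 + k) / c - k) := by
    intro k
    induction k with
    | zero => intro _; simp [hs0, hy0, hz0]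
    | succ k ih =>
      intro hk
      obtain ⟨i1, i2, i3⟩ := ih (by omega)
      have hkm : (k : ℝ) < m := by exact_mod_cast hk
      have hyk : y (s (2 * k)) = 0 := by
        rcases mul_eq_zero.1 i2 with h | h
        · exact h
        · linarith
      have m1 := hmono (2 * k) (by omega)
      have m2 := hmono (2 * k + 1) (by omega)
      have hb := upper_block ω hω ε x y z hadm hx hy hz hxz _ _ m1 hyk (hupper k (by omega))
      have hl := le_initial_of_deriv_nonpos z _ (s (2 * k + 1)) (s (2 * k + 2)) hz
        (fun t ht => mul_nonpos_of_nonneg_of_nonpos (hadm t).1 (hlower k (by omega) t ht))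
        _ ⟨m2, le_refl _⟩
      rw [show 2 * (k + 1) = 2 * k + 2 by ring]
      refine ⟨by linarith, ?_, ?_⟩
      · rcases (Nat.succ_le_iff.1 hk |> Nat.succ_le_iff.2).eq_or_lt with h | h
        · rw [← h]; simp
        · have u := hupper (k + 1) h (s (2 * k + 2))
            ⟨le_refl _, hmono (2 * (k + 1)) (by omega)⟩
          have l := hlower k (by omega) (s (2 * k + 2)) ⟨m2, le_refl _⟩
          rw [le_antisymm l u, zero_mul]
      · set a := ω ^ 2 * (s (2 * k + 1) - s (2 * k)) ^ 2 with ha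
        have hf : 1 + a ≤ c * Real.exp ((1 + a) / c - 1) := by
          have := Real.add_one_le_exp ((1 + a) / c - 1)
          calc 1 + a = c * ((1 + a) / c - 1 + 1) := by field_simp; ring
            _ ≤ _ := mul_le_mul_of_nonneg_left this hc0.le
        have hQ : ω ^ 2 * s (2 * k) ^ 2 + a ≤ ω ^ 2 * s (2 * k + 2) ^ 2 := by
          rw [ha, ← mul_add]
          apply mul_le_mul_of_nonneg_left _ (by positivity)
          nlinarith [mul_nonneg i1 (sub_nonneg.2 m1)]
        calc z (s (2 * k + 2)) ≤ z (s (2 * k)) * (1 + a) := hl.trans hb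
          _ ≤ (c ^ k * Real.exp ((ω ^ 2 * (s (2 * k)) ^ 2 + k) / c - k)) *
              (c * Real.exp ((1 + a) / c - 1)) :=
            mul_le_mul i3 hf (by positivity) (by positivity)
          _ = c ^ (k + 1) * Real.exp ((ω ^ 2 * s (2 * k) ^ 2 + a + (k + 1 : ℕ)) / c
                - (k + 1 : ℕ)) := by
            rw [pow_succ, mul_mul_mul_comm, ← Real.exp_add]
            congr 2
            push_cast
            ring
          _ ≤ _ := by gcongr
  obtain ⟨-, -, h⟩ := key m le_rfl
  rw [hsT] at h
  refine h.trans ?_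
  obtain ⟨d, hd⟩ := Nat.exists_eq_add_of_le hm
  have hdr : (n : ℝ) + 1 = m + d := by exact_mod_cast hd
  have hcN : ω ^ 2 * T ^ 2 = (c - 1) * (n + 1) := by rw [hc]; field_simp; ring
  have he : Real.exp (1 - 1 / c) ≤ c := by
    have h1 := Real.add_one_le_exp (1 / c - 1)
    have h2 : Real.exp (1 - 1 / c) * Real.exp (1 / c - 1) = 1 := by
      rw [← Real.exp_add]; simp
    have h3 : 1 / c ≤ Real.exp (1 / c - 1) := by linarith
    have h4 : Real.exp (1 - 1 / c) * (1 / c) ≤ 1 := by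
      exact (mul_le_mul_of_nonneg_left h3 (Real.exp_pos _).le).trans h2.le
    rw [mul_one_div, div_le_one hc0] at h4
    exact h4
  have hE : (ω ^ 2 * T ^ 2 + m) / c - m = d * (1 - 1 / c) := by
    rw [hcN, hdr]; field_simp; ring
  rw [hE, hd, pow_add, Real.exp_nat_mul]
  gcongr
end

section
/- For the phase-space ODE system, suppose the control ε is nondecreasing; fix a time τ and define C(t) = (2ω − ε(τ))·√(1 + x(t)² + y(t)²) + ε(τ)·x(t). Then C is differentiable with C'(t) = 2ω·(ε(t) − ε(τ))·y(t) for every t; in particular, C is nonincreasing on any interval [τ, t₁] on which y(t) ≤ 0. -/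
/-- for the phase-space ODE system with nondecreasing control `ε`, fixing a
time `τ` and setting `C(t) = (2ω − ε(τ))·√(1 + x(t)² + y(t)²) + ε(τ)·x(t)`, the function
`C` is differentiable with `C'(t) = 2ω·(ε(t) − ε(τ))·y(t)`; in particular `C` is
nonincreasing on any interval `[τ, t₁]` on which `y ≤ 0`. -/
theorem C_derivative_and_monotone
    (ω : ℝ) (hω : 0 < ω) (ε x y : ℝ → ℝ) (hε : Continuous ε)
    (hmono : Monotone ε)
    (hx : ∀ t, HasDerivAt x (-(2 * ω - ε t) * y t) t)
    (hy : ∀ t, HasDerivAt y ((2 * ω - ε t) * x t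
      + ε t * Real.sqrt (1 + (x t) ^ 2 + (y t) ^ 2)) t)
    (τ : ℝ) :
    (∀ t, HasDerivAt
        (fun s => (2 * ω - ε τ) * Real.sqrt (1 + (x s) ^ 2 + (y s) ^ 2) + ε τ * x s)
        (2 * ω * (ε t - ε τ) * y t) t)
    ∧ (∀ t₁, τ ≤ t₁ → (∀ t ∈ Set.Icc τ t₁, y t ≤ 0) →
        AntitoneOn
          (fun s => (2 * ω - ε τ) * Real.sqrt (1 + (x s) ^ 2 + (y s) ^ 2) + ε τ * x s)
          (Set.Icc τ t₁)) := by
  have hC : ∀ t, HasDerivAt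
        (fun s => (2 * ω - ε τ) * Real.sqrt (1 + (x s) ^ 2 + (y s) ^ 2) + ε τ * x s)
        (2 * ω * (ε t - ε τ) * y t) t := by
    intro t
    have hpos : 0 < 1 + (x t) ^ 2 + (y t) ^ 2 := by positivity
    have hS : 0 < Real.sqrt (1 + (x t) ^ 2 + (y t) ^ 2) := Real.sqrt_pos.mpr hpos
    have h1 : HasDerivAt (fun s => 1 + (x s) ^ 2 + (y s) ^ 2)
        (2 * ε t * y t * Real.sqrt (1 + (x t) ^ 2 + (y t) ^ 2)) t := by
      have h := (((hx t).fun_pow 2).const_add 1).fun_add ((hy t).fun_pow 2)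
      refine h.congr_deriv ?_
      norm_num
      ring
    have h2 : HasDerivAt (fun s => Real.sqrt (1 + (x s) ^ 2 + (y s) ^ 2)) (ε t * y t) t := by
      refine (h1.sqrt hpos.ne').congr_deriv ?_
      field_simp
    refine ((h2.const_mul (2 * ω - ε τ)).fun_add ((hx t).const_mul (ε τ))).congr_deriv ?_
    ring
  refine ⟨hC, ?_⟩
  intro t₁ _ hy0
  refine antitoneOn_of_deriv_nonpos (convex_Icc τ t₁)
    (fun t _ => (hC t).continuousAt.continuousWithinAt)
    (fun t _ => (hC t).differentiableAt.differentiableWithinAt) ?_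
  intro t ht
  have ht' := interior_subset ht
  rw [(hC t).deriv]
  have h1 : 0 ≤ ε t - ε τ := sub_nonneg.mpr (hmono ht'.1)
  exact mul_nonpos_of_nonneg_of_nonpos (by positivity) (hy0 t ht')
end

section
/- (Theorem 2, ODE form: no winding for monotone control.) For the phase-space ODE system with admissible control (0 ≤ ε(t) ≤ ω) such that ε is nondecreasing, and with initial condition x(0) = y(0) = 0: there do not exist times 0 ≤ τ < t₁ such that y(τ) = 0, x(τ) ≤ 0, y(t) ≤ 0 for all t ∈ [τ, t₁], y(t₁) = 0, and x(t₁) > 0. That is, the trajectory can never cross the strictly positive x-axis after traversing the lower half-plane, so the winding number of the phase-space trajectory remains zero for any monotonically increasing control. -/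
/-- Theorem 2, ODE form: for the phase-space ODE system with admissible
nondecreasing control and initial condition at the origin, there are no times
`0 ≤ τ < t₁` with `y(τ) = 0`, `x(τ) ≤ 0`, `y ≤ 0` on `[τ, t₁]`, `y(t₁) = 0` and
`x(t₁) > 0`: the trajectory can never cross the strictly positive `x`-axis after
traversing the lower half-plane, so the winding number remains zero. -/
theorem no_winding_for_monotone_control
    (ω : ℝ) (hω : 0 < ω) (ε x y : ℝ → ℝ) (hε : Continuous ε)
    (hadm : ∀ t, 0 ≤ ε t ∧ ε t ≤ ω) (hmono : Monotone ε)
    (hx : ∀ t, HasDerivAt x (-(2 * ω - ε t) * y t) t)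
    (hy : ∀ t, HasDerivAt y ((2 * ω - ε t) * x t
      + ε t * Real.sqrt (1 + (x t) ^ 2 + (y t) ^ 2)) t)
    (hx0 : x 0 = 0) (hy0 : y 0 = 0) :
    ¬ ∃ τ t₁ : ℝ, 0 ≤ τ ∧ τ < t₁ ∧ y τ = 0 ∧ x τ ≤ 0 ∧
        (∀ t ∈ Set.Icc τ t₁, y t ≤ 0) ∧ y t₁ = 0 ∧ 0 < x t₁ := by
  rintro ⟨τ, t₁, h0τ, hτ, -, -, -, hy1, hx1⟩
  -- hyperbolic cosine and light-cone coordinates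
  obtain ⟨c, hc⟩ : ∃ c : ℝ → ℝ, c = fun t => Real.sqrt (1 + (x t) ^ 2 + (y t) ^ 2) := ⟨_, rfl⟩
  have hcpos : ∀ t, 0 < c t := by
    intro t; rw [hc]; exact Real.sqrt_pos.mpr (by positivity)
  have hcsq : ∀ t, c t ^ 2 = 1 + x t ^ 2 + y t ^ 2 := by
    intro t; rw [hc]; exact Real.sq_sqrt (by positivity)
  have hy' : ∀ t, HasDerivAt y ((2 * ω - ε t) * x t + ε t * c t) t := by
    intro t; rw [hc]; exact hy t
  have hcd : ∀ t, HasDerivAt c (ε t * y t) t := by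
    intro t
    have h1 := ((((hx t).pow 2).const_add 1).add ((hy' t).pow 2)).sqrt
      (by have : 0 < 1 + x t ^ 2 + y t ^ 2 := by positivity
          exact this.ne')
    have h3 : Real.sqrt (1 + (x t) ^ 2 + (y t) ^ 2) = c t := by rw [hc]
    have h4 := (hcpos t).ne'
    have h2 := h1.congr_deriv (g' := ε t * y t) (by
      simp only [Pi.add_apply, Pi.pow_apply]
      rw [h3]
      field_simp
      push_cast
      ring)
    rw [hc]
    exact h2
  have hxc : Continuous x := continuous_iff_continuousAt.mpr fun t => (hx t).continuousAt
  have hyc : Continuous y := continuous_iff_continuousAt.mpr fun t => (hy' t).continuousAt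
  have hcc : Continuous c := continuous_iff_continuousAt.mpr fun t => (hcd t).continuousAt
  obtain ⟨D, hD⟩ : ∃ D : ℝ → ℝ, D = fun t =>
    (ω - ε t) * (c t - x t - 1) + ω * (c t + x t - 1) := ⟨_, rfl⟩
  have hDc : Continuous D := by rw [hD]; fun_prop
  -- `D` is nonincreasing while `u = c - x ≥ 1`
  have hanti : ∀ a b, a ≤ b → (∀ r ∈ Set.Icc a b, 1 ≤ c r - x r) →
      ∀ r ∈ Set.Icc a b, D r ≤ D a := by
    intro a b hab hu
    refine image_le_of_liminf_slope_right_le_deriv_boundary (f := D) (B := fun _ => D a)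
      (B' := fun _ => 0) hDc.continuousOn le_rfl continuousOn_const
      (fun s _ => (hasDerivAt_const s (D a)).hasDerivWithinAt) ?_
    intro s hs r hr
    have hde : HasDerivAt (fun t => (ω - ε s) * (c t - x t - 1) + ω * (c t + x t - 1)) 0 s := by
      have h := ((((hcd s).sub (hx s)).sub_const 1).const_mul (ω - ε s)).add
        ((((hcd s).add (hx s)).sub_const 1).const_mul ω)
      exact h.congr_deriv (by ring)
    have ht := (hasDerivAt_iff_tendsto_slope.mp hde).mono_left
      (nhdsWithin_mono s (show Set.Ioi s ⊆ {s}ᶜ from fun z hz => ne_of_gt hz))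
    have hev := ht.eventually_lt_const hr
    have hev2 : ∀ᶠ z in nhdsWithin s (Set.Ioi s), z < b :=
      nhdsWithin_le_nhds (Iio_mem_nhds hs.2)
    refine Filter.Eventually.frequently ?_
    filter_upwards [hev, hev2, self_mem_nhdsWithin] with z h1 h2 h3
    have h3' : s < z := h3
    refine lt_of_le_of_lt ?_ h1
    simp only [slope_def_field]
    have h4 : 0 < z - s := sub_pos.mpr h3'
    refine div_le_div_of_nonneg_right ?_ h4.le
    have h5 := hmono h3'.le
    have h6 := hu z ⟨hs.1.trans h3'.le, h2.le⟩
    rw [hD]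
    simp only
    nlinarith [mul_nonneg (sub_nonneg.mpr h5) (sub_nonneg.mpr h6)]
  -- the region `D ≤ 0` is contained in `u ≥ 1`
  have hDu : ∀ t, D t ≤ 0 → 1 ≤ c t - x t ∧ (c t - x t = 1 → x t = 0 ∧ y t = 0) := by
    intro t ht
    rw [hD] at ht
    simp only at ht
    have hs := hcsq t
    obtain ⟨he0, he1⟩ := hadm t
    have hupos : 0 < c t - x t := by
      have : |x t| < c t := by
        refine abs_lt_of_sq_lt_sq ?_ (hcpos t).le
        nlinarith [sq_nonneg (y t)]
      linarith [le_abs_self (x t)]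
    obtain ⟨u, hu⟩ : ∃ u, u = c t - x t := ⟨_, rfl⟩
    obtain ⟨v, hv⟩ : ∃ v, v = c t + x t := ⟨_, rfl⟩
    have huv : u * v = 1 + y t ^ 2 := by rw [hu, hv]; linear_combination hs
    rw [← hu, ← hv] at ht
    rw [← hu] at hupos ⊢
    constructor
    · by_contra hlt
      push Not at hlt
      have h1 : ω * (v - 1) ≤ ω * (1 - u) := by
        nlinarith [mul_nonneg he0 (sub_nonneg.mpr hlt.le)]
      have h2 : v - 1 ≤ 1 - u := le_of_mul_le_mul_left h1 hω
      nlinarith [mul_le_mul_of_nonneg_left h2 hupos.le, sq_nonneg (y t),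
        mul_pos (sub_pos.mpr hlt) (sub_pos.mpr hlt)]
    · intro h1
      rw [h1] at ht huv
      have h2 : v ≤ 1 := by
        by_contra h
        push Not at h
        nlinarith [mul_pos hω (sub_pos.mpr h)]
      have h3 : y t ^ 2 = 0 := le_antisymm (by linarith) (sq_nonneg _)
      have h4 : y t = 0 := by simpa using h3
      refine ⟨?_, h4⟩
      rw [h4] at huv
      linarith
  -- local continuation from the origin
  have horig : ∀ s, x s = 0 → y s = 0 → ∃ δ > 0, ∀ t ∈ Set.Icc s (s + δ), 1 ≤ c t - x t := by
    intro s hxs hys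
    have hcs : c s = 1 := by
      rw [hc]; simp [hxs, hys]
    have hF : Continuous (fun p : ℝ × ℝ =>
        (c p.1 - x p.1) * Real.cos (2 * ω * (p.2 - p.1))
          + y p.1 * Real.sin (2 * ω * (p.2 - p.1))) := by fun_prop
    have hev := (hF.continuousAt (x := (s, s))).eventually_const_lt (u := 0)
      (by simp [hxs, hys, hcs])
    obtain ⟨δ, hδ, hball⟩ := Metric.eventually_nhds_iff.mp hev
    have hpos : ∀ t ∈ Set.Icc s (s + δ / 2), 0 ≤ y t := by
      intro t ht
      have hg : ∀ r, HasDerivAt (fun r => y r * Real.cos (2 * ω * (t - r))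
          + x r * Real.sin (2 * ω * (t - r)))
          (ε r * ((c r - x r) * Real.cos (2 * ω * (t - r))
          + y r * Real.sin (2 * ω * (t - r)))) r := by
        intro r
        have hin : HasDerivAt (fun r => 2 * ω * (t - r)) (2 * ω * (-1)) r :=
          ((hasDerivAt_id r).const_sub t).const_mul (2 * ω)
        have h := ((hy' r).mul hin.cos).add ((hx r).mul hin.sin)
        exact h.congr_deriv (by ring)
      have hm : MonotoneOn (fun r => y r * Real.cos (2 * ω * (t - r))
          + x r * Real.sin (2 * ω * (t - r))) (Set.Icc s t) := by
        refine monotoneOn_of_deriv_nonneg (convex_Icc s t)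
          (fun r _ => (hg r).continuousAt.continuousWithinAt)
          (fun r _ => (hg r).differentiableAt.differentiableWithinAt) ?_
        intro r hr
        rw [interior_Icc] at hr
        rw [(hg r).deriv]
        refine mul_nonneg (hadm r).1 (le_of_lt ?_)
        have hd : dist (r, t) (s, s) < δ := by
          rw [Prod.dist_eq, max_lt_iff, Real.dist_eq, Real.dist_eq, abs_lt, abs_lt]
          have := hr.1
          have := hr.2
          have := ht.1
          have := ht.2
          simp only
          refine ⟨⟨?_, ?_⟩, ?_, ?_⟩ <;> linarith
        exact hball hd
      have := hm ⟨le_rfl, ht.1⟩ ⟨ht.1, le_rfl⟩ ht.1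
      simpa [hxs, hys] using this
    refine ⟨δ / 2, by linarith, ?_⟩
    have hud : ∀ t, HasDerivAt (fun t => c t - x t) (2 * ω * y t) t := by
      intro t
      have h := (hcd t).sub (hx t)
      exact h.congr_deriv (by ring)
    have hm : MonotoneOn (fun t => c t - x t) (Set.Icc s (s + δ / 2)) := by
      refine monotoneOn_of_deriv_nonneg (convex_Icc _ _)
        (fun r _ => (hud r).continuousAt.continuousWithinAt)
        (fun r _ => (hud r).differentiableAt.differentiableWithinAt) ?_
      intro r hr
      rw [(hud r).deriv]
      exact mul_nonneg (by linarith) (hpos r (interior_subset hr))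
    intro t ht
    have := hm ⟨le_rfl, by linarith⟩ ht ht.1
    simpa [hxs, hcs] using this
  -- continuity method
  have hmain : Set.Icc 0 t₁ ⊆ {t | D t ≤ 0} := by
    refine IsClosed.Icc_subset_of_forall_exists_gt
      ((isClosed_le hDc continuous_const).inter isClosed_Icc) ?_ ?_
    · have hc0 : c 0 = 1 := by rw [hc]; simp [hx0, hy0]
      simp [hD, hc0, hx0]
    · rintro s ⟨hs, -⟩ z hz
      have hs' : D s ≤ 0 := hs
      have hz' : s < z := hz
      have hloc : ∃ δ > 0, ∀ t ∈ Set.Icc s (s + δ), 1 ≤ c t - x t := by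
        obtain ⟨h1, h2⟩ := hDu s hs'
        rcases h1.eq_or_lt with h | h
        · obtain ⟨h3, h4⟩ := h2 h.symm
          exact horig s h3 h4
        · have hev := ((hcc.sub hxc).continuousAt (x := s)).eventually_const_lt (u := 1) h
          obtain ⟨δ, hδ, hball⟩ := Metric.eventually_nhds_iff.mp hev
          refine ⟨δ / 2, by linarith, fun t ht => le_of_lt (hball ?_)⟩
          rw [Real.dist_eq, abs_lt]
          have := ht.1
          have := ht.2
          constructor <;> linarith
      obtain ⟨δ, hδ, hu⟩ := hloc
      have hmem : min z (s + δ) ∈ Set.Icc s (s + δ) :=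
        ⟨le_min hz'.le (by linarith), min_le_right _ _⟩
      refine ⟨min z (s + δ), ?_, lt_min hz' (by linarith), min_le_left _ _⟩
      exact (hanti s (s + δ) (by linarith) hu _ hmem).trans hs'
  have hfin := (hDu t₁ (hmain ⟨by linarith, le_rfl⟩)).1
  have hs := hcsq t₁
  rw [hy1] at hs
  nlinarith
end

section
/- For the phase-space ODE system, suppose ε(t) ≤ ε_max for all t, where ε_max < ω, and define D(t) = (2ω − ε_max)·√(1 + x(t)² + y(t)²) + ε_max·x(t). Then D is differentiable with D'(t) = 2ω·(ε(t) − ε_max)·y(t) for every t; in particular, D is nonincreasing on any interval on which y(t) ≥ 0. -/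
/-- for the phase-space ODE system with `ε(t) ≤ ε_max < ω` for all `t`,
the function `D(t) = (2ω − ε_max)·√(1 + x(t)² + y(t)²) + ε_max·x(t)` is differentiable
with `D'(t) = 2ω·(ε(t) − ε_max)·y(t)`; in particular `D` is nonincreasing on any
interval on which `y ≥ 0`. -/
theorem D_derivative_and_monotone
    (ω : ℝ) (hω : 0 < ω) (ε x y : ℝ → ℝ) (hε : Continuous ε)
    (εmax : ℝ) (hεmax : εmax < ω) (hbd : ∀ t, ε t ≤ εmax)
    (hx : ∀ t, HasDerivAt x (-(2 * ω - ε t) * y t) t)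
    (hy : ∀ t, HasDerivAt y ((2 * ω - ε t) * x t
      + ε t * Real.sqrt (1 + (x t) ^ 2 + (y t) ^ 2)) t) :
    (∀ t, HasDerivAt
        (fun s => (2 * ω - εmax) * Real.sqrt (1 + (x s) ^ 2 + (y s) ^ 2) + εmax * x s)
        (2 * ω * (ε t - εmax) * y t) t)
    ∧ (∀ a b : ℝ, a ≤ b → (∀ t ∈ Set.Icc a b, 0 ≤ y t) →
        AntitoneOn
          (fun s => (2 * ω - εmax) * Real.sqrt (1 + (x s) ^ 2 + (y s) ^ 2) + εmax * x s)
          (Set.Icc a b)) := by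
  have key : ∀ t, HasDerivAt
        (fun s => (2 * ω - εmax) * Real.sqrt (1 + (x s) ^ 2 + (y s) ^ 2) + εmax * x s)
        (2 * ω * (ε t - εmax) * y t) t := by
    intro t
    have hpos : 0 < 1 + (x t) ^ 2 + (y t) ^ 2 := by positivity
    have hs : 0 < Real.sqrt (1 + (x t) ^ 2 + (y t) ^ 2) := Real.sqrt_pos.mpr hpos
    have h1 : HasDerivAt (fun s => 1 + (x s) ^ 2 + (y s) ^ 2)
        (2 * (ε t * y t) * Real.sqrt (1 + (x t) ^ 2 + (y t) ^ 2)) t := by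
      have h := (((hx t).fun_pow 2).const_add 1).fun_add ((hy t).fun_pow 2)
      refine h.congr_deriv ?_
      push_cast
      ring
    have h2 : HasDerivAt (fun s => Real.sqrt (1 + (x s) ^ 2 + (y s) ^ 2)) (ε t * y t) t := by
      refine (h1.sqrt hpos.ne').congr_deriv ?_
      field_simp
    refine ((h2.const_mul (2 * ω - εmax)).fun_add ((hx t).const_mul εmax)).congr_deriv ?_
    ring
  refine ⟨key, ?_⟩
  intro a b _ hab
  refine antitoneOn_of_deriv_nonpos (convex_Icc a b)
    (fun t _ => (key t).continuousAt.continuousWithinAt)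
    (fun t _ => (key t).differentiableAt.differentiableWithinAt) ?_
  intro t ht
  rw [(key t).deriv]
  have h0 := hab t (interior_subset ht)
  have h1 := hbd t
  exact mul_nonpos_of_nonpos_of_nonneg
    (mul_nonpos_of_nonneg_of_nonpos (by linarith) (by linarith)) h0
end

section
/- (Squeezing cap at re-entry into the upper half-plane.) For the phase-space ODE system with 0 ≤ ε(t) ≤ ε_max for all t, where ε_max < ω: if at some time t* one has y(t*) = 0, x(t*) ≤ 0, and y'(t*) ≥ 0, then (√(1 + x(t*)²) − x(t*))² ≤ ω/(ω − ε_max). Equivalently, writing x(t*) = −sinh(2r(t*)), the squeezing at re-entry satisfies e^{4r(t*)} ≤ ω/(ω − ε_max). -/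
/-- squeezing cap at re-entry into the upper half-plane: for the
phase-space ODE system with `0 ≤ ε(t) ≤ ε_max < ω`, if at some time `t*` one has
`y(t*) = 0`, `x(t*) ≤ 0` and `y'(t*) ≥ 0`, then
`(√(1 + x(t*)²) − x(t*))² ≤ ω/(ω − ε_max)` (i.e. `e^{4r(t*)} ≤ ω/(ω − ε_max)`). -/
theorem squeezing_cap_at_reentry
    (ω : ℝ) (hω : 0 < ω) (ε x y : ℝ → ℝ) (hε : Continuous ε)
    (εmax : ℝ) (hεmax : εmax < ω) (hbd : ∀ t, 0 ≤ ε t ∧ ε t ≤ εmax)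
    (hx : ∀ t, HasDerivAt x (-(2 * ω - ε t) * y t) t)
    (hy : ∀ t, HasDerivAt y ((2 * ω - ε t) * x t
      + ε t * Real.sqrt (1 + (x t) ^ 2 + (y t) ^ 2)) t)
    (tst : ℝ) (hyt : y tst = 0) (hxt : x tst ≤ 0)
    (hdy : 0 ≤ (2 * ω - ε tst) * x tst
      + ε tst * Real.sqrt (1 + (x tst) ^ 2 + (y tst) ^ 2)) :
    (Real.sqrt (1 + (x tst) ^ 2) - x tst) ^ 2 ≤ ω / (ω - εmax) := by
  obtain ⟨h0, h1⟩ := hbd tst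
  have hr : 1 + (x tst) ^ 2 + (y tst) ^ 2 = 1 + (x tst) ^ 2 := by rw [hyt]; ring
  rw [hr] at hdy
  have hc0 : 0 ≤ Real.sqrt (1 + (x tst) ^ 2) := Real.sqrt_nonneg _
  have hc : Real.sqrt (1 + (x tst) ^ 2) ^ 2 = 1 + (x tst) ^ 2 :=
    Real.sq_sqrt (by positivity)
  generalize Real.sqrt (1 + (x tst) ^ 2) = c at *
  generalize x tst = a at *
  generalize ε tst = e at *
  have hu : 0 ≤ c - a := by linarith
  rw [le_div_iff₀ (by linarith)]
  have k1 := mul_nonneg hdy hu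
  have k2 := mul_nonneg (sub_nonneg.2 h1) (sq_nonneg (c - a))
  have k3 : ω * (c - a) ^ 2 - ω = -(2 * ω * a * (c - a)) := by
    linear_combination ω * hc
  nlinarith
end

section
/- (Paper's Lemma 2: per-winding growth factor away from criticality.) For the phase-space ODE system with 0 ≤ ε(t) ≤ ε_max for all t, where ε_max < ω: suppose t₀ ≤ s ≤ t₁, y(t₀) = 0, y(t) ≥ 0 for all t ∈ [t₀, s], and y(t) ≤ 0 for all t ∈ [s, t₁]. Then √(1 + x(t₁)² + y(t₁)²) ≤ (ω/(ω − ε_max))·√(1 + x(t₀)²); equivalently, cosh(2r(t₁)) ≤ (1/(1 − ε_max/ω))·cosh(2r(t₀)), a bound independent of the elapsed time t₁ − t₀. -/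
/-- Paper's Lemma 2: per-winding growth factor away from criticality:
for the phase-space ODE system with `0 ≤ ε(t) ≤ ε_max < ω`, if `t₀ ≤ s ≤ t₁`,
`y(t₀) = 0`, `y ≥ 0` on `[t₀, s]` and `y ≤ 0` on `[s, t₁]`, then
`√(1 + x(t₁)² + y(t₁)²) ≤ (ω/(ω − ε_max))·√(1 + x(t₀)²)`,
a bound independent of the elapsed time `t₁ − t₀`. -/
theorem single_winding_growth_bound_subcritical
    (ω : ℝ) (hω : 0 < ω) (ε x y : ℝ → ℝ) (hε : Continuous ε)
    (εmax : ℝ) (hεmax : εmax < ω) (hbd : ∀ t, 0 ≤ ε t ∧ ε t ≤ εmax)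
    (hx : ∀ t, HasDerivAt x (-(2 * ω - ε t) * y t) t)
    (hy : ∀ t, HasDerivAt y ((2 * ω - ε t) * x t
      + ε t * Real.sqrt (1 + (x t) ^ 2 + (y t) ^ 2)) t)
    (t₀ s t₁ : ℝ) (h₀s : t₀ ≤ s) (hs₁ : s ≤ t₁) (hy0 : y t₀ = 0)
    (hupper : ∀ t ∈ Set.Icc t₀ s, 0 ≤ y t)
    (hlower : ∀ t ∈ Set.Icc s t₁, y t ≤ 0) :
    Real.sqrt (1 + (x t₁) ^ 2 + (y t₁) ^ 2)
      ≤ (ω / (ω - εmax)) * Real.sqrt (1 + (x t₀) ^ 2) := by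
  have hC : ∀ t, HasDerivAt (fun t => Real.sqrt (1 + (x t) ^ 2 + (y t) ^ 2)) (ε t * y t) t := by
    intro t
    have hpos : 0 < 1 + (x t) ^ 2 + (y t) ^ 2 := by positivity
    have h := ((((hx t).pow 2).const_add 1).add ((hy t).pow 2)).sqrt hpos.ne'
    refine h.congr_deriv ?_
    have h2 : 0 < Real.sqrt (1 + (x t) ^ 2 + (y t) ^ 2) := Real.sqrt_pos.2 hpos
    simp only [Pi.add_apply, Pi.pow_apply]
    rw [div_eq_iff (by positivity)]
    push_cast
    ring
  have hF : ∀ t, HasDerivAt (fun t => (2 * ω - εmax) * Real.sqrt (1 + (x t) ^ 2 + (y t) ^ 2)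
      + εmax * x t) (2 * ω * (ε t - εmax) * y t) t := by
    intro t
    refine (((hC t).const_mul (2 * ω - εmax)).add ((hx t).const_mul εmax)).congr_deriv ?_
    ring
  have hanti : AntitoneOn (fun t => (2 * ω - εmax) * Real.sqrt (1 + (x t) ^ 2 + (y t) ^ 2)
      + εmax * x t) (Set.Icc t₀ s) := by
    apply antitoneOn_of_deriv_nonpos (convex_Icc _ _)
    · exact fun t _ => (hF t).continuousAt.continuousWithinAt
    · exact fun t _ => (hF t).differentiableAt.differentiableWithinAt
    · intro t ht
      rw [(hF t).deriv]
      refine mul_nonpos_of_nonpos_of_nonneg ?_ (hupper t (interior_subset ht))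
      exact mul_nonpos_of_nonneg_of_nonpos (by positivity) (by linarith [(hbd t).2])
  have hanti2 : AntitoneOn (fun t => Real.sqrt (1 + (x t) ^ 2 + (y t) ^ 2)) (Set.Icc s t₁) := by
    apply antitoneOn_of_deriv_nonpos (convex_Icc _ _)
    · exact fun t _ => (hC t).continuousAt.continuousWithinAt
    · exact fun t _ => (hC t).differentiableAt.differentiableWithinAt
    · intro t ht
      rw [(hC t).deriv]
      exact mul_nonpos_of_nonneg_of_nonpos (hbd t).1 (hlower t (interior_subset ht))
  have h1 := hanti ⟨le_rfl, h₀s⟩ ⟨h₀s, le_rfl⟩ h₀s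
  have h2 := hanti2 ⟨le_rfl, hs₁⟩ ⟨hs₁, le_rfl⟩ hs₁
  have he : 0 ≤ εmax := (hbd 0).1.trans (hbd 0).2
  have h3 : -x s ≤ Real.sqrt (1 + (x s) ^ 2 + (y s) ^ 2) :=
    Real.le_sqrt_of_sq_le (by nlinarith [sq_nonneg (y s)])
  have h4 : x t₀ ≤ Real.sqrt (1 + (x t₀) ^ 2) := Real.le_sqrt_of_sq_le (by linarith)
  simp only [hy0] at h1 h2
  rw [show (1 + (x t₀) ^ 2 + (0 : ℝ) ^ 2) = 1 + (x t₀) ^ 2 by ring] at h1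
  have hp : 0 < ω - εmax := by linarith
  rw [div_mul_eq_mul_div, le_div_iff₀ hp]
  have h5 := mul_le_mul_of_nonneg_left h3 he
  have h6 := mul_le_mul_of_nonneg_left h4 he
  have h7 := mul_le_mul_of_nonneg_left h2 hp.le
  linarith
end

section
/- (Theorem 4, ODE form: saturation of squeezing away from criticality at fixed winding number.) For the phase-space ODE system with 0 ≤ ε(t) ≤ ε_max for all t, where ε_max < ω, suppose x(0) = y(0) = 0 and let T ≥ 0, n ∈ ℕ. Suppose there is a partition 0 = s₀ ≤ s₁ ≤ … ≤ s_{2m} = T with m ≤ n + 1 such that for each i, y(t) ≥ 0 for all t ∈ [s_{2i}, s_{2i+1}] and y(t) ≤ 0 for all t ∈ [s_{2i+1}, s_{2i+2}] (at most n+1 excursions into the upper half-plane, i.e., winding number at most n). Then √(1 + x(T)² + y(T)²) ≤ (ω/(ω − ε_max))^{n+1}; in particular sinh(2r(T)) ≤ (1/(1 − ε_max/ω))^{n+1}, regardless of the total evolution time T. -/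
theorem antitone_step (f f' : ℝ → ℝ) (a b : ℝ) (hab : a ≤ b)
    (hf : ∀ t, HasDerivAt f (f' t) t) (h : ∀ t ∈ Set.Icc a b, f' t ≤ 0) : f b ≤ f a := by
  have hA : AntitoneOn f (Set.Icc a b) := by
    apply antitoneOn_of_deriv_nonpos (convex_Icc a b)
    · exact fun t _ => (hf t).continuousAt.continuousWithinAt
    · exact fun t _ => (hf t).differentiableAt.differentiableWithinAt
    · intro t ht
      rw [(hf t).deriv]
      exact h t (interior_subset ht)
  exact hA (Set.left_mem_Icc.2 hab) (Set.right_mem_Icc.2 hab) hab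

/-- Theorem 4, ODE form: for the phase-space ODE system with
`0 ≤ ε(t) ≤ ε_max < ω`, starting at the origin, if the trajectory makes at most `n+1`
excursions into the upper half-plane up to time `T` (winding number at most `n`), then
`√(1 + x(T)² + y(T)²) ≤ (ω/(ω − ε_max))^{n+1}`, regardless of `T`. -/
theorem squeezing_saturation_subcritical
    (ω : ℝ) (hω : 0 < ω) (ε x y : ℝ → ℝ) (hε : Continuous ε)
    (εmax : ℝ) (hεmax : εmax < ω) (hbd : ∀ t, 0 ≤ ε t ∧ ε t ≤ εmax)
    (hx : ∀ t, HasDerivAt x (-(2 * ω - ε t) * y t) t)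
    (hy : ∀ t, HasDerivAt y ((2 * ω - ε t) * x t
      + ε t * Real.sqrt (1 + (x t) ^ 2 + (y t) ^ 2)) t)
    (hx0 : x 0 = 0) (hy0 : y 0 = 0)
    (T : ℝ) (hT : 0 ≤ T) (n : ℕ)
    (m : ℕ) (hm : m ≤ n + 1) (s : ℕ → ℝ)
    (hs0 : s 0 = 0) (hsT : s (2 * m) = T)
    (hmono : ∀ i < 2 * m, s i ≤ s (i + 1))
    (hupper : ∀ i < m, ∀ t ∈ Set.Icc (s (2 * i)) (s (2 * i + 1)), 0 ≤ y t)
    (hlower : ∀ i < m, ∀ t ∈ Set.Icc (s (2 * i + 1)) (s (2 * i + 2)), y t ≤ 0) :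
    Real.sqrt (1 + (x T) ^ 2 + (y T) ^ 2) ≤ (ω / (ω - εmax)) ^ (n + 1) := by
  set C : ℝ → ℝ := fun t => Real.sqrt (1 + (x t) ^ 2 + (y t) ^ 2) with hC
  have hpos : ∀ t, 0 < C t := fun t => Real.sqrt_pos.2 (by positivity)
  have hxC : ∀ t, |x t| ≤ C t := fun t =>
    Real.abs_le_sqrt (by nlinarith [sq_nonneg (y t)])
  have hCd : ∀ t, HasDerivAt C (ε t * y t) t := by
    intro t
    have h1 := ((((hx t).pow 2).const_add 1).add ((hy t).pow 2)).sqrt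
      (by simp only [Pi.add_apply, Pi.pow_apply]; positivity)
    have hp := hpos t
    refine HasDerivAt.congr_deriv (h1.congr_of_eventuallyEq (Filter.Eventually.of_forall fun u => ?_)) ?_
    · simp [hC]
    · change _ / (2 * C t) = _
      change (_ + _ * (_ + ε t * C t)) / (2 * C t) = _
      rw [div_eq_iff (by positivity)]
      push_cast
      ring
  have hm0 : 0 ≤ εmax := (hbd 0).1.trans (hbd 0).2
  have hd : 0 < ω - εmax := by linarith
  have hR : 1 ≤ ω / (ω - εmax) := by rw [le_div_iff₀ hd]; linarith
  have key : ∀ i ≤ m, C (s (2 * i)) ≤ (ω / (ω - εmax)) ^ i := by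
    intro i
    induction i with
    | zero => intro _; simp [hC, hs0, hx0, hy0]
    | succ i ih =>
      intro hi
      have ih' := ih (by omega)
      have h1 := antitone_step (fun t => (2 * ω - εmax) * C t + εmax * x t) _ _ _
        (hmono (2 * i) (by omega))
        (fun t => ((hCd t).const_mul (2 * ω - εmax)).add ((hx t).const_mul εmax)) (by
          intro t ht
          have hyt := hupper i (by omega) t ht
          have := mul_nonneg (mul_nonneg hω.le (sub_nonneg.2 (hbd t).2)) hyt
          nlinarith)
      have h2 := antitone_step C _ _ _ (hmono (2 * i + 1) (by omega)) hCd (by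
          intro t ht
          exact mul_nonpos_of_nonneg_of_nonpos (hbd t).1 (hlower i (by omega) t ht))
      have h3 : C (s (2 * i + 1)) ≤ ω / (ω - εmax) * C (s (2 * i)) := by
        rw [div_mul_eq_mul_div, le_div_iff₀ hd]
        have a1 := mul_le_mul_of_nonneg_left (abs_le.1 (hxC (s (2 * i + 1)))).1 hm0
        have a2 := mul_le_mul_of_nonneg_left (abs_le.1 (hxC (s (2 * i)))).2 hm0
        linarith
      calc C (s (2 * (i + 1))) ≤ C (s (2 * i + 1)) := h2
        _ ≤ _ := h3
        _ ≤ ω / (ω - εmax) * (ω / (ω - εmax)) ^ i :=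
          mul_le_mul_of_nonneg_left ih' (by linarith)
        _ = _ := by ring
  have hk := key m le_rfl
  rw [hsT] at hk
  exact hk.trans (pow_le_pow_right₀ hR hm)
end

section
/- (Value of the optimal on–off protocol at the critical point.) Let ω > 0, n ∈ ℕ, φ₀ ∈ (0, π) and φ̃ ∈ [0, π). Define f : [0, 2πn + φ̃] → ℝ by f(φ) = 1/(2ω·cos²(φ/2)) if either (φ − 2π⌊φ/(2π)⌋ < φ₀ and φ < 2πn) or φ ≥ 2πn, and f(φ) = 1/(2ω) otherwise. Then: (i) ∫₀^{2πn+φ̃} (2ω·f(φ) − 1)·(cot(φ/2)/2) dφ = −n·ln(cos(φ₀/2)) − ln(cos(φ̃/2)); and (ii) ∫₀^{2πn+φ̃} f(φ) dφ = (n/ω)·(tan(φ₀/2) + π − φ₀/2) + (1/ω)·tan(φ̃/2). -/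
open Real intervalIntegral

lemma piece_aux {F P p : ℝ → ℝ} {a b : ℝ} (hab : a ≤ b)
    (hP : ∀ x ∈ Set.Icc a b, HasDerivAt P (p x) x) (hp : ContinuousOn p (Set.Icc a b))
    (hF : ∀ x ∈ Set.Ioo a b, F x = p x) :
    IntervalIntegrable F MeasureTheory.volume a b ∧ ∫ x in a..b, F x = P b - P a := by
  have hpi : IntervalIntegrable p MeasureTheory.volume a b :=
    ContinuousOn.intervalIntegrable (by rwa [Set.uIcc_of_le hab])
  have hae : F =ᵐ[MeasureTheory.volume.restrict (Set.Ioc a b)] p := by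
    rw [← MeasureTheory.restrict_Ioo_eq_restrict_Ioc]
    exact (MeasureTheory.ae_restrict_iff' measurableSet_Ioo).2 (Filter.Eventually.of_forall hF)
  constructor
  · rw [intervalIntegrable_iff_integrableOn_Ioc_of_le hab] at hpi ⊢
    exact MeasureTheory.Integrable.congr hpi hae.symm
  · rw [← integral_eq_sub_of_hasDerivAt (f := P) (f' := p)
      (by rwa [Set.uIcc_of_le hab]) hpi, integral_of_le hab, integral_of_le hab]
    exact MeasureTheory.integral_congr_ae hae

lemma cos_ne_aux (k : ℕ) {θ x : ℝ} (hθ : θ < π)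
    (hx : x ∈ Set.Icc (2 * π * k) (2 * π * k + θ)) : Real.cos (x / 2) ≠ 0 := by
  have h : x / 2 = (x / 2 - k * π) + k * π := by ring
  rw [h, Real.cos_add_nat_mul_pi]
  refine mul_ne_zero (by simp) (ne_of_gt (Real.cos_pos_of_mem_Ioo ⟨?_, ?_⟩))
  · nlinarith [hx.1, pi_pos]
  · nlinarith [hx.2, pi_pos]

lemma half_add_aux (k : ℕ) (θ : ℝ) : (2 * π * k + θ) / 2 = θ / 2 + k * π := by ring

lemma on_two (ω : ℝ) (hω : 0 < ω) (k : ℕ) {θ : ℝ} (h0 : 0 ≤ θ) (hθ : θ < π) (f : ℝ → ℝ)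
    (hf : ∀ x ∈ Set.Ioo (2 * π * k) (2 * π * k + θ), f x = 1 / (2 * ω * Real.cos (x / 2) ^ 2)) :
    IntervalIntegrable f MeasureTheory.volume (2 * π * k) (2 * π * k + θ) ∧
    ∫ x in (2 * π * k)..(2 * π * k + θ), f x = 1 / ω * Real.tan (θ / 2) := by
  have h := piece_aux (F := f) (P := fun x => 1 / ω * Real.tan (x / 2))
    (p := fun x => 1 / (2 * ω * Real.cos (x / 2) ^ 2)) (a := 2 * π * k) (b := 2 * π * k + θ)
    (by linarith) ?_ ?_ hf
  · refine ⟨h.1, h.2.trans ?_⟩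
    have h2 := half_add_aux k 0
    simp only [add_zero] at h2
    simp only [half_add_aux, h2, Real.tan_add_nat_mul_pi]
    simp
  · intro x hx
    have hc := cos_ne_aux k hθ hx
    have := ((Real.hasDerivAt_tan hc).comp x ((hasDerivAt_id x).div_const 2)).const_mul (1 / ω)
    refine this.congr_deriv ?_
    field_simp
  · refine ContinuousOn.div continuousOn_const (by fun_prop) ?_
    intro x hx
    have hc := cos_ne_aux k hθ hx
    positivity

lemma on_one (ω : ℝ) (hω : 0 < ω) (k : ℕ) {θ : ℝ} (h0 : 0 ≤ θ) (hθ : θ < π) (f : ℝ → ℝ)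
    (hf : ∀ x ∈ Set.Ioo (2 * π * k) (2 * π * k + θ), f x = 1 / (2 * ω * Real.cos (x / 2) ^ 2)) :
    IntervalIntegrable (fun x => (2 * ω * f x - 1) * (Real.cot (x / 2) / 2))
      MeasureTheory.volume (2 * π * k) (2 * π * k + θ) ∧
    ∫ x in (2 * π * k)..(2 * π * k + θ), (2 * ω * f x - 1) * (Real.cot (x / 2) / 2)
      = - Real.log (Real.cos (θ / 2)) := by
  have h := piece_aux (F := fun x => (2 * ω * f x - 1) * (Real.cot (x / 2) / 2))
    (P := fun x => - Real.log (Real.cos (x / 2)))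
    (p := fun x => Real.sin (x / 2) / (2 * Real.cos (x / 2)))
    (a := 2 * π * k) (b := 2 * π * k + θ)
    (by linarith) ?_ ?_ ?_
  · refine ⟨h.1, h.2.trans ?_⟩
    have h2 := half_add_aux k 0
    simp only [add_zero] at h2
    have hl : ∀ y : ℝ, Real.log (Real.cos (y + k * π)) = Real.log (Real.cos y) := by
      intro y
      rw [Real.cos_add_nat_mul_pi, ← Real.log_abs, abs_mul]
      simp
    simp only [half_add_aux, h2, hl]
    simp
  · intro x hx
    have hc := cos_ne_aux k hθ hx
    have := ((((hasDerivAt_id x).div_const 2).cos).log hc).neg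
    refine this.congr_deriv ?_
    simp only [id]
    field_simp
  · refine ContinuousOn.div (by fun_prop) (by fun_prop) ?_
    intro x hx
    have hc := cos_ne_aux k hθ hx
    positivity
  · intro x hx
    have hc := cos_ne_aux k hθ (Set.Ioo_subset_Icc_self hx)
    simp only [hf x hx, Real.cot_eq_cos_div_sin]
    by_cases hs : Real.sin (x / 2) = 0
    · simp [hs]
    · field_simp
      linarith [Real.sin_sq_add_cos_sq (x / 2)]

lemma floor_aux {x : ℝ} (k : ℕ) (h1 : 2 * π * k ≤ x) (h2 : x < 2 * π * (k + 1)) :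
    ⌊x / (2 * π)⌋ = (k : ℤ) := by
  rw [Int.floor_eq_iff]
  have : 0 < 2 * π := by positivity
  constructor
  · rw [le_div_iff₀ this]; push_cast; linarith
  · rw [div_lt_iff₀ this]; push_cast; linarith

lemma glue_aux (F : ℝ → ℝ) (n : ℕ) (t A B : ℝ)
    (h : ∀ k < n, IntervalIntegrable F MeasureTheory.volume (2 * π * k) (2 * π * (k + 1)) ∧
      ∫ x in (2 * π * k)..(2 * π * (k + 1)), F x = A)
    (ht : IntervalIntegrable F MeasureTheory.volume (2 * π * n) (2 * π * n + t) ∧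
      ∫ x in (2 * π * n)..(2 * π * n + t), F x = B) :
    ∫ x in (0:ℝ)..(2 * π * n + t), F x = n * A + B := by
  have h1 : ∀ m ≤ n, IntervalIntegrable F MeasureTheory.volume 0 (2 * π * m) ∧
      ∫ x in (0:ℝ)..(2 * π * m), F x = m * A := by
    intro m
    induction m with
    | zero => intro _; simp
    | succ m ih =>
      intro hm
      obtain ⟨i1, i2⟩ := ih (by omega)
      obtain ⟨j1, j2⟩ := h m (by omega)
      push_cast
      refine ⟨i1.trans j1, ?_⟩
      rw [← integral_add_adjacent_intervals i1 j1, i2, j2]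
      ring
  obtain ⟨i1, i2⟩ := h1 n le_rfl
  rw [← integral_add_adjacent_intervals i1 ht.1, i2, ht.2]

/-- value of the optimal on–off protocol at the critical point: with
`f(φ) = 1/(2ω·cos²(φ/2))` on the "on" segments (fractional phase `< φ₀` within the first
`n` windings, or past `2πn`) and `f(φ) = 1/(2ω)` on the "off" segments, one has
(i) `∫₀^{2πn+φ̃} (2ω·f − 1)·cot(φ/2)/2 dφ = −n·ln cos(φ₀/2) − ln cos(φ̃/2)` and
(ii) `∫₀^{2πn+φ̃} f dφ = (n/ω)(tan(φ₀/2) + π − φ₀/2) + (1/ω)·tan(φ̃/2)`. -/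
theorem on_off_protocol_value
    (ω : ℝ) (hω : 0 < ω) (n : ℕ) (φ₀ : ℝ) (hφ₀ : φ₀ ∈ Set.Ioo 0 π)
    (φt : ℝ) (hφt : φt ∈ Set.Ico 0 π)
    (f : ℝ → ℝ)
    (hf : ∀ φ, f φ =
      if (φ - 2 * π * ⌊φ / (2 * π)⌋ < φ₀ ∧ φ < 2 * π * n) ∨ 2 * π * n ≤ φ
      then 1 / (2 * ω * Real.cos (φ / 2) ^ 2) else 1 / (2 * ω)) :
    (∫ φ in (0:ℝ)..(2 * π * n + φt),
        (2 * ω * f φ - 1) * (Real.cot (φ / 2) / 2)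
      = -(n : ℝ) * Real.log (Real.cos (φ₀ / 2)) - Real.log (Real.cos (φt / 2)))
    ∧ (∫ φ in (0:ℝ)..(2 * π * n + φt), f φ
      = (n / ω) * (Real.tan (φ₀ / 2) + π - φ₀ / 2) + (1 / ω) * Real.tan (φt / 2)) := by
  obtain ⟨h0, hpi⟩ := hφ₀
  obtain ⟨ht0, htpi⟩ := hφt
  have hon : ∀ k < n, ∀ x ∈ Set.Ioo (2 * π * k) (2 * π * k + φ₀),
      f x = 1 / (2 * ω * Real.cos (x / 2) ^ 2) := by
    intro k hk x hx
    have hkn : (k : ℝ) + 1 ≤ n := by exact_mod_cast hk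
    have hx2 : x < 2 * π * (k + 1) := by nlinarith [hx.2]
    rw [hf, if_pos]
    left
    rw [floor_aux k hx.1.le hx2]
    push_cast
    exact ⟨by linarith [hx.2], by nlinarith [pi_pos]⟩
  have hoff : ∀ k < n, ∀ x ∈ Set.Ioo (2 * π * k + φ₀) (2 * π * (k + 1)),
      f x = 1 / (2 * ω) := by
    intro k hk x hx
    have hkn : (k : ℝ) + 1 ≤ n := by exact_mod_cast hk
    have hxn : x < 2 * π * n := by nlinarith [pi_pos, hx.2]
    rw [hf, if_neg]
    rw [floor_aux k (by linarith [hx.1]) hx.2]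
    push_cast
    rintro (h | h)
    · linarith [h.1, hx.1]
    · linarith
  have hend : ∀ x ∈ Set.Ioo (2 * π * n) (2 * π * n + φt),
      f x = 1 / (2 * ω * Real.cos (x / 2) ^ 2) := by
    intro x hx
    rw [hf, if_pos (Or.inr hx.1.le)]
  have hle : ∀ k : ℕ, 2 * π * k + φ₀ ≤ 2 * π * (k + 1) := by intro k; linarith
  constructor
  · rw [glue_aux _ n φt (-Real.log (Real.cos (φ₀ / 2))) _ ?_ (on_one ω hω n ht0 htpi f hend)]
    · ring
    · intro k hk
      obtain ⟨i1, i2⟩ := on_one ω hω k h0.le hpi f (hon k hk)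
      obtain ⟨j1, j2⟩ := piece_aux (F := fun x => (2 * ω * f x - 1) * (Real.cot (x / 2) / 2))
        (P := fun _ => 0) (p := fun _ => 0) (hle k) (fun x _ => hasDerivAt_const x 0)
        continuousOn_const (by
          intro x hx
          simp only [hoff k hk x hx]
          field_simp
          simp)
      refine ⟨i1.trans j1, ?_⟩
      rw [← integral_add_adjacent_intervals i1 j1, i2, j2]
      simp
  · rw [glue_aux _ n φt (1 / ω * Real.tan (φ₀ / 2) + 1 / (2 * ω) * (2 * π - φ₀)) _ ?_
      (on_two ω hω n ht0 htpi f hend)]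
    · field_simp
      ring
    · intro k hk
      obtain ⟨i1, i2⟩ := on_two ω hω k h0.le hpi f (hon k hk)
      obtain ⟨j1, j2⟩ := piece_aux (F := f)
        (P := fun x => 1 / (2 * ω) * x) (p := fun _ => 1 / (2 * ω)) (hle k)
        (fun x _ => by simpa using (hasDerivAt_id x).const_mul (1 / (2 * ω)))
        continuousOn_const (hoff k hk)
      refine ⟨i1.trans j1, ?_⟩
      rw [← integral_add_adjacent_intervals i1 j1, i2, j2]
      ring
end

section
/- Define g : (0, π) → ℝ by g(x) = −ln(cos(x/2)) / (tan(x/2) + π − x/2). Then g is differentiable on (0, π), and at any critical point x ∈ (0, π) (i.e., any x with g'(x) = 0) one has g(x) = cot(x/2). -/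
open Real

theorem squeezing_aux (x : ℝ) (hx : x ∈ Set.Ioo (0:ℝ) π) :
    0 < Real.cos (x / 2) ∧ 0 < Real.sin (x / 2) ∧ 0 < Real.tan (x / 2) + π - x / 2 ∧
    HasDerivAt (fun x : ℝ => -Real.log (Real.cos (x / 2)) / (Real.tan (x / 2) + π - x / 2))
      ((Real.tan (x / 2) / 2 * (Real.tan (x / 2) + π - x / 2) -
        -Real.log (Real.cos (x / 2)) * (Real.tan (x / 2) ^ 2 / 2)) /
        (Real.tan (x / 2) + π - x / 2) ^ 2) x := by
  obtain ⟨h0, h1⟩ := hx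
  have hc : 0 < Real.cos (x / 2) := Real.cos_pos_of_mem_Ioo ⟨by linarith, by linarith⟩
  have hs : 0 < Real.sin (x / 2) := Real.sin_pos_of_pos_of_lt_pi (by linarith) (by linarith)
  have ht : 0 < Real.tan (x / 2) := by rw [Real.tan_eq_sin_div_cos]; positivity
  have hD : 0 < Real.tan (x / 2) + π - x / 2 := by linarith
  refine ⟨hc, hs, hD, ?_⟩
  have hh : HasDerivAt (fun x : ℝ => x / 2) (1 / 2) x := (hasDerivAt_id x).div_const 2
  have hN : HasDerivAt (fun x : ℝ => -Real.log (Real.cos (x / 2))) (Real.tan (x / 2) / 2) x := by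
    have := (hh.cos.log hc.ne').neg
    refine HasDerivAt.congr_deriv this ?_
    rw [Real.tan_eq_sin_div_cos]
    field_simp
  have hT : HasDerivAt (fun x : ℝ => Real.tan (x / 2) + π - x / 2)
      (Real.tan (x / 2) ^ 2 / 2) x := by
    have := (((Real.hasDerivAt_tan hc.ne').comp x hh).add_const π).sub hh
    refine HasDerivAt.congr_deriv this ?_
    rw [Real.tan_eq_sin_div_cos]
    field_simp
    linarith [Real.sin_sq_add_cos_sq (x / 2)]
  exact hN.div hT (ne_of_gt hD)

/-- the squeezing-rate function
`g(x) = −ln(cos(x/2)) / (tan(x/2) + π − x/2)` is differentiable on `(0, π)`, and at any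
critical point `x ∈ (0, π)` (i.e. `g'(x) = 0`) one has `g(x) = cot(x/2)`. -/
theorem squeezing_rate_critical_point_identity :
    (∀ x ∈ Set.Ioo (0:ℝ) π,
      DifferentiableAt ℝ
        (fun x : ℝ => -Real.log (Real.cos (x / 2)) / (Real.tan (x / 2) + π - x / 2)) x)
    ∧ (∀ x ∈ Set.Ioo (0:ℝ) π,
        deriv
          (fun x : ℝ => -Real.log (Real.cos (x / 2)) / (Real.tan (x / 2) + π - x / 2))
          x = 0 →
        -Real.log (Real.cos (x / 2)) / (Real.tan (x / 2) + π - x / 2)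
          = Real.cot (x / 2)) := by
  refine ⟨fun x hx => (squeezing_aux x hx).2.2.2.differentiableAt, fun x hx h => ?_⟩
  obtain ⟨hc, hs, hD, hd⟩ := squeezing_aux x hx
  rw [hd.deriv, div_eq_zero_iff] at h
  have h := h.resolve_right (by positivity)
  have ht : 0 < Real.tan (x / 2) := by rw [Real.tan_eq_sin_div_cos]; positivity
  have h2 : Real.tan (x / 2) + π - x / 2 = -Real.log (Real.cos (x / 2)) * Real.tan (x / 2) := by
    apply mul_left_cancel₀ ht.ne'
    linarith
  have h3 : Real.cot (x / 2) = (Real.tan (x / 2))⁻¹ := by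
    rw [Real.cot_eq_cos_div_sin, Real.tan_eq_sin_div_cos, inv_div]
  rw [h3, div_eq_iff hD.ne', h2]
  field_simp
end

section
/- Define g : (0, π) → ℝ by g(x) = −ln(cos(x/2)) / (tan(x/2) + π − x/2). Then g attains a maximum on (0, π): there exists x* ∈ (0, π) such that g(x) ≤ g(x*) for all x ∈ (0, π), and moreover 0.24 < g(x*) < 0.25. -/
open Real

/-- the rate as a function of the half angle. -/
noncomputable def rateH (t : ℝ) : ℝ := -Real.log (Real.cos t) / (Real.tan t + π - t)

lemma rateH_den {t : ℝ} (h0 : 0 < t) (h1 : t < π / 2) : 0 < Real.tan t + π - t := by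
  have := Real.tan_pos_of_pos_of_lt_pi_div_two h0 h1
  linarith

lemma rateH_cos {t : ℝ} (h0 : 0 < t) (h1 : t < π / 2) : 0 < Real.cos t :=
  Real.cos_pos_of_mem_Ioo ⟨by linarith, h1⟩

lemma rateH_upper {t : ℝ} (h0 : 0 < t) (h1 : t < π / 2) : rateH t < 0.25 := by
  have hc := rateH_cos h0 h1
  rw [rateH, div_lt_iff₀ (rateH_den h0 h1)]
  have hlog : -Real.log (Real.cos t) ≤ 1 / (4 * Real.cos t) - 1 + 2 * Real.log 2 := by
    have h := Real.log_le_sub_one_of_pos (x := 1 / (4 * Real.cos t)) (by positivity)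
    rw [one_div, Real.log_inv, Real.log_mul (by norm_num) hc.ne',
      show (4:ℝ) = 2 ^ 2 by norm_num, Real.log_pow] at h
    rw [one_div]
    norm_num at h ⊢
    linarith
  have key : 1 / Real.cos t - Real.tan t ≤ π / 2 - t := by
    rw [Real.tan_eq_sin_div_cos, ← sub_div, div_le_iff₀ hc]
    have a := Real.one_sub_sq_div_two_le_cos (x := π / 2 - t)
    have b := Real.mul_le_sin (x := π / 2 - t) (by linarith) (by linarith)
    rw [Real.cos_pi_div_two_sub] at a
    rw [Real.sin_pi_div_two_sub] at b
    have hpi : (1:ℝ) / 2 ≤ 2 / π := by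
      rw [div_le_div_iff₀ (by norm_num) Real.pi_pos]; linarith [Real.pi_lt_four]
    have hu : 0 < π / 2 - t := by linarith
    nlinarith [mul_le_mul_of_nonneg_right hpi hu.le]
  have e : 1 / (4 * Real.cos t) = (1 / Real.cos t) / 4 := by field_simp
  rw [e] at hlog
  have := Real.log_two_lt_d9
  have := Real.pi_gt_d4
  linarith

lemma rateH_small {t : ℝ} (h0 : 0 < t) (h1 : t ≤ π / 4) : rateH t ≤ 0.24 := by
  have h2 : t < π / 2 := by linarith [Real.pi_pos]
  have hc := rateH_cos h0 h2
  rw [rateH, div_le_iff₀ (rateH_den h0 h2)]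
  have h := Real.log_le_sub_one_of_pos (x := (Real.cos t)⁻¹) (by positivity)
  rw [Real.log_inv] at h
  have ht := Real.lt_tan h0 h2
  have hcos : (0.7:ℝ) ≤ Real.cos t := by
    have := Real.cos_le_cos_of_nonneg_of_le_pi h0.le (by linarith [Real.pi_pos]) h1
    rw [Real.cos_pi_div_four] at this
    have : (1.4:ℝ) ≤ √2 := Real.le_sqrt_of_sq_le (by norm_num)
    linarith
  have : (Real.cos t)⁻¹ ≤ (0.7:ℝ)⁻¹ := inv_anti₀ (by norm_num) hcos
  norm_num at this ⊢
  linarith [Real.pi_gt_three]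

lemma rateH_large {t : ℝ} (h0 : 0 < t) (h1 : t < π / 2) (h : Real.cos t ≤ 1 / 100) :
    rateH t ≤ 0.24 := by
  have hc := rateH_cos h0 h1
  rw [rateH, div_le_iff₀ (rateH_den h0 h1)]
  obtain ⟨r, hr, hrc⟩ : ∃ r : ℝ, 0 < r ∧ r ^ 2 = (Real.cos t)⁻¹ :=
    ⟨√((Real.cos t)⁻¹), by positivity, Real.sq_sqrt (by positivity)⟩
  have hl : -Real.log (Real.cos t) ≤ 2 * (r - 1) := by
    rw [← Real.log_inv, ← hrc, Real.log_pow]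
    have := Real.log_le_sub_one_of_pos hr
    push_cast
    linarith
  have h100 : 100 ≤ r ^ 2 := by
    rw [hrc, le_inv_comm₀ (by norm_num) hc]; linarith
  have h10 : 10 ≤ r := by nlinarith
  have htan : r ^ 2 - 1 ≤ Real.tan t := by
    rw [hrc, Real.tan_eq_sin_div_cos, le_div_iff₀ hc, sub_mul, inv_mul_cancel₀ hc.ne']
    have hs := Real.sin_pos_of_pos_of_lt_pi h0 (by linarith)
    nlinarith [Real.sin_sq_add_cos_sq t]
  norm_num
  nlinarith [Real.pi_gt_three]

lemma rateH_point : (0.24:ℝ) < rateH (Real.arctan 4) := by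
  have h0 : 0 < Real.arctan 4 := Real.arctan_pos.2 (by norm_num)
  have h1 := Real.arctan_lt_pi_div_two 4
  rw [rateH, lt_div_iff₀ (rateH_den h0 h1), Real.tan_arctan, Real.cos_arctan]
  have hinv := Real.arctan_inv_of_pos (x := 4) (by norm_num)
  have hlt : Real.arctan (4:ℝ)⁻¹ < (4:ℝ)⁻¹ := by
    have := Real.lt_tan (x := Real.arctan (4:ℝ)⁻¹) (Real.arctan_pos.2 (by norm_num))
      (Real.arctan_lt_pi_div_two _)
    rwa [Real.tan_arctan] at this
  have hlog : -Real.log (1 / √(1 + 4 ^ 2)) = (4 * Real.log 2 + Real.log (17 / 16)) / 2 := by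
    rw [one_div, Real.log_inv, neg_neg, Real.log_sqrt (by norm_num),
      show (1 + 4 ^ 2 : ℝ) = 2 ^ 4 * (17 / 16) by norm_num,
      Real.log_mul (by norm_num) (by norm_num), Real.log_pow]
    norm_num
  have hb := Real.one_sub_inv_le_log_of_pos (x := 17 / 16) (by norm_num)
  have := Real.log_two_gt_d9
  have := Real.pi_lt_d4
  rw [hlog]
  norm_num at *
  linarith

lemma rateH_max : ∃ s, 0 < s ∧ s < π / 2 ∧ (∀ t, 0 < t → t < π / 2 → rateH t ≤ rateH s) := by
  let K : Set ℝ := Set.Icc (π / 4) (π / 2) ∩ {t | 1 / 100 ≤ Real.cos t}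
  have hK : IsCompact K :=
    isCompact_Icc.inter_right (isClosed_le continuous_const Real.continuous_cos)
  have hKm : ∀ t ∈ K, 0 < t ∧ t < π / 2 := by
    rintro t ⟨⟨ha, hb⟩, hc⟩
    refine ⟨by linarith [Real.pi_pos], lt_of_le_of_ne hb ?_⟩
    rintro rfl
    simp only [Set.mem_setOf_eq, Real.cos_pi_div_two] at hc
    norm_num at hc
  have hout : ∀ t, 0 < t → t < π / 2 → t ∉ K → rateH t ≤ 0.24 := by
    intro t h0 h1 hn
    by_cases ha : t ≤ π / 4
    · exact rateH_small h0 ha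
    · refine rateH_large h0 h1 ?_
      by_contra hc
      exact hn ⟨⟨by linarith, h1.le⟩, (not_le.1 hc).le⟩
  have hp : Real.arctan 4 ∈ K := by
    by_contra hn
    have := hout _ (Real.arctan_pos.2 (by norm_num)) (Real.arctan_lt_pi_div_two 4) hn
    linarith [rateH_point]
  have hcont : ContinuousOn rateH K := by
    intro t ht
    obtain ⟨h0, h1⟩ := hKm t ht
    have hc := (rateH_cos h0 h1).ne'
    refine ContinuousAt.continuousWithinAt ?_
    exact ((Real.continuous_cos.continuousAt.log hc).neg).div
      (((Real.continuousAt_tan.2 hc).add continuousAt_const).sub continuousAt_id)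
      (rateH_den h0 h1).ne'
  obtain ⟨s, hs, hmax⟩ := hK.exists_isMaxOn ⟨_, hp⟩ hcont
  refine ⟨s, (hKm s hs).1, (hKm s hs).2, fun t h0 h1 => ?_⟩
  by_cases ht : t ∈ K
  · exact hmax ht
  · have h2 : rateH (Real.arctan 4) ≤ rateH s := hmax hp
    linarith [hout t h0 h1 ht, rateH_point]

/-- the squeezing-rate function
`g(x) = −ln(cos(x/2)) / (tan(x/2) + π − x/2)` attains a maximum on `(0, π)`, and the
maximal value lies strictly between `0.24` and `0.25` (it is `Γ/4 ≈ 0.2436`). -/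
theorem squeezing_rate_max :
    ∃ xstar ∈ Set.Ioo (0:ℝ) π,
      (∀ x ∈ Set.Ioo (0:ℝ) π,
        -Real.log (Real.cos (x / 2)) / (Real.tan (x / 2) + π - x / 2)
          ≤ -Real.log (Real.cos (xstar / 2)) / (Real.tan (xstar / 2) + π - xstar / 2))
      ∧ (0.24 : ℝ) <
          -Real.log (Real.cos (xstar / 2)) / (Real.tan (xstar / 2) + π - xstar / 2)
      ∧ -Real.log (Real.cos (xstar / 2)) / (Real.tan (xstar / 2) + π - xstar / 2)
          < (0.25 : ℝ) := by
  obtain ⟨s, h0, h1, hm⟩ := rateH_max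
  refine ⟨2 * s, ⟨by linarith, by linarith⟩, ?_⟩
  rw [mul_div_cancel_left₀ s (two_ne_zero)]
  refine ⟨fun x hx => hm (x / 2) (by linarith [hx.1]) (by linarith [hx.2]), ?_, rateH_upper h0 h1⟩
  exact rateH_point.trans_le
    (hm _ (Real.arctan_pos.2 (by norm_num)) (Real.arctan_lt_pi_div_two 4))
end

section
/- (Theorem 3, upper bound: linear-in-time bound on the achievable squeezing.) Let ω > 0, let G = sup_{x ∈ (0,π)} [−ln(cos(x/2)) / (tan(x/2) + π − x/2)], and let C = sup_{u ∈ (0, π/2)} (−ln(cos u) − G·tan u). Then for every Φ > 0 and every measurable f : [0, Φ] → ℝ satisfying 1/(2ω) ≤ f(φ) and 2ω·f(φ)·cos²(φ/2) ≤ 1 for almost every φ ∈ [0, Φ], and such that f and (2ω·f(φ) − 1)·cot(φ/2) are integrable on [0, Φ], the squeezing functional satisfies ∫₀^Φ (2ω·f(φ) − 1)·(cot(φ/2)/2) dφ ≤ G·ω·∫₀^Φ f(φ) dφ + C. -/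
open Real MeasureTheory intervalIntegral

/-- The optimal squeezing rate `G = sup_{x ∈ (0,π)} −ln(cos(x/2))/(tan(x/2) + π − x/2)`
(equal to `Γ/4 ≈ 0.2436`). -/
noncomputable def optimalRate : ℝ :=
  sSup ((fun x : ℝ => -Real.log (Real.cos (x / 2)) / (Real.tan (x / 2) + π - x / 2)) ''
    Set.Ioo 0 π)

/-- The additive constant `C = sup_{u ∈ (0, π/2)} (−ln(cos u) − G·tan u)`. -/
noncomputable def additiveConst : ℝ :=
  sSup ((fun u : ℝ => -Real.log (Real.cos u) - optimalRate * Real.tan u) ''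
    Set.Ioo 0 (π / 2))

noncomputable def hAux (G u : ℝ) : ℝ := (tan u) ^ 2 * max ((tan u)⁻¹ - G) 0 - G

lemma neg_log_cos_le {u a : ℝ} (ha : 0 < a) (h0 : 0 ≤ u) (h1 : u < π / 2) :
    -Real.log (Real.cos u) ≤ a * Real.tan u + (a - 1 - Real.log a) := by
  have hc : 0 < cos u := cos_pos_of_mem_Ioo ⟨by linarith [pi_pos], h1⟩
  have hs : 0 ≤ sin u := sin_nonneg_of_nonneg_of_le_pi h0 (by linarith [pi_pos])
  have h := Real.log_le_sub_one_of_pos (x := a / cos u) (by positivity)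
  rw [Real.log_div ha.ne' hc.ne'] at h
  have h2 : 1 / cos u ≤ 1 + tan u := by
    rw [tan_eq_sin_div_cos, ← sub_nonneg]
    have : 1 + sin u / cos u - 1 / cos u = (cos u + sin u - 1) / cos u := by field_simp
    rw [this]
    apply div_nonneg _ hc.le
    nlinarith [sin_sq_add_cos_sq u, sin_le_one u, cos_le_one u]
  have h3 : a / cos u = a * (1 / cos u) := by ring
  have h4 := mul_le_mul_of_nonneg_left h2 ha.le
  linarith

lemma den_pos {x : ℝ} (hx : x ∈ Set.Ioo 0 π) : 0 < Real.tan (x / 2) + π - x / 2 := by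
  have h : 0 < tan (x/2) := tan_pos_of_pos_of_lt_pi_div_two (by linarith [hx.1]) (by linarith [hx.2])
  linarith [hx.2, pi_pos]

lemma bdd_rate : BddAbove ((fun x : ℝ => -Real.log (Real.cos (x / 2)) / (Real.tan (x / 2) + π - x / 2)) ''
    Set.Ioo 0 π) := by
  refine ⟨1, ?_⟩
  rintro _ ⟨x, hx, rfl⟩
  have h := neg_log_cos_le (u := x/2) one_pos (by linarith [hx.1]) (by linarith [hx.2])
  simp only [Real.log_one] at h
  simp only
  rw [div_le_one (den_pos hx)]
  linarith [hx.2, pi_pos]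

lemma le_rate {x : ℝ} (hx : x ∈ Set.Ioo 0 π) :
    -Real.log (Real.cos (x / 2)) ≤ optimalRate * (Real.tan (x / 2) + π - x / 2) := by
  rw [← div_le_iff₀ (den_pos hx)]
  exact le_csSup bdd_rate ⟨x, hx, rfl⟩

lemma rate_pos : 0 < optimalRate := by
  have hx : π / 2 ∈ Set.Ioo 0 π := ⟨by linarith [pi_pos], by linarith [pi_pos]⟩
  have h := le_rate hx
  have hd := den_pos hx
  have hl : Real.log (cos (π / 2 / 2)) < 0 := by
    apply Real.log_neg
    · exact cos_pos_of_mem_Ioo ⟨by linarith [pi_pos], by linarith [pi_pos]⟩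
    · rw [← cos_zero]
      exact cos_lt_cos_of_nonneg_of_le_pi_div_two le_rfl (by linarith [pi_pos]) (by linarith [pi_pos])
  by_contra hn
  push Not at hn
  nlinarith

lemma le_const {u : ℝ} (hu : u ∈ Set.Ioo 0 (π / 2)) :
    -Real.log (Real.cos u) - optimalRate * Real.tan u ≤ additiveConst := by
  refine le_csSup ⟨optimalRate - 1 - Real.log optimalRate, ?_⟩ ⟨u, hu, rfl⟩
  rintro _ ⟨x, hx, rfl⟩
  have := neg_log_cos_le rate_pos hx.1.le hx.2
  simp only
  linarith

lemma const_nonneg : 0 ≤ additiveConst := by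
  have hc : ContinuousAt (fun u : ℝ => -Real.log (Real.cos u) - optimalRate * Real.tan u) 0 := by
    refine ((ContinuousAt.log continuous_cos.continuousAt (by simp)).neg).sub
      (continuousAt_const.mul ((continuousAt_tan).2 (by simp)))
  have ht := hc.tendsto.mono_left (nhdsWithin_le_nhds (s := Set.Ioi 0))
  simp only [cos_zero, Real.log_one, tan_zero, neg_zero, mul_zero, sub_zero] at ht
  refine le_of_tendsto ht ?_
  filter_upwards [Ioo_mem_nhdsGT (show (0:ℝ) < π / 2 by linarith [pi_pos])] with u hu
  exact le_const hu

lemma le_const' {u : ℝ} (hu : u ∈ Set.Ico 0 (π / 2)) :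
    -Real.log (Real.cos u) - optimalRate * Real.tan u ≤ additiveConst := by
  rcases hu.1.eq_or_lt with h | h
  · subst h; simpa using const_nonneg
  · exact le_const ⟨h, hu.2⟩

lemma hAux_meas (G : ℝ) : Measurable (hAux G) := by
  have : Measurable tan := by
    have : (tan : ℝ → ℝ) = fun x => sin x / cos x := by ext x; exact tan_eq_sin_div_cos x
    rw [this]; exact measurable_sin.div measurable_cos
  unfold hAux
  fun_prop

lemma hAux_ge (G u : ℝ) : -G ≤ hAux G u := by
  unfold hAux
  have : 0 ≤ (tan u) ^ 2 * max ((tan u)⁻¹ - G) 0 := by positivity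
  linarith

lemma hAux_eq_neg {G u : ℝ} (hG : 0 < G) (h : tan u ≤ 0 ∨ G⁻¹ ≤ tan u) : hAux G u = -G := by
  unfold hAux
  have : (tan u)⁻¹ - G ≤ 0 := by
    rcases h with h | h
    · have := inv_nonpos.2 h; linarith
    · have := inv_le_of_inv_le₀ hG h; linarith
  rw [max_eq_right this]; ring

lemma hAux_eq_pos {G u : ℝ} (hG : 0 < G) (h0 : 0 ≤ tan u) (h : tan u ≤ G⁻¹) :
    hAux G u = tan u - G * (1 + tan u ^ 2) := by
  unfold hAux
  rcases h0.eq_or_lt with h0 | h0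
  · rw [← h0]; simp
  have : 0 ≤ (tan u)⁻¹ - G := by
    have := (le_inv_comm₀ h0 hG).1 h; linarith
  rw [max_eq_left this]; field_simp; ring

lemma hAux_le {G : ℝ} (hG : 0 < G) (u : ℝ) : hAux G u ≤ G⁻¹ := by
  by_cases h : tan u ≤ 0 ∨ G⁻¹ ≤ tan u
  · rw [hAux_eq_neg hG h]; have := inv_pos.2 hG; linarith
  · push Not at h
    rw [hAux_eq_pos hG h.1.le h.2.le]
    have : 0 ≤ G * (1 + tan u ^ 2) := by positivity
    linarith [h.2]

lemma hAux_int {G : ℝ} (hG : 0 < G) (a b : ℝ) : IntervalIntegrable (hAux G) volume a b := by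
  refine IntervalIntegrable.mono_fun (g := hAux G) (f := fun _ => G + G⁻¹) (by simp)
    (hAux_meas G).aestronglyMeasurable (Filter.Eventually.of_forall fun x => ?_)
  have h1 := hAux_le hG x
  have h2 := hAux_ge G x
  have := inv_pos.2 hG
  simp only [Real.norm_eq_abs]
  rw [abs_of_pos (show 0 < G + G⁻¹ by linarith), abs_le]
  constructor <;> linarith

lemma hAux_per (G : ℝ) : Function.Periodic (hAux G) π := by
  intro x; unfold hAux; rw [tan_periodic x]

lemma integral_first {G v : ℝ} (hG : 0 < G) (h0 : 0 ≤ v) (h1 : v ≤ arctan G⁻¹) :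
    ∫ u in (0:ℝ)..v, hAux G u = -Real.log (cos v) - G * tan v := by
  have := intervalIntegral.integral_eq_sub_of_hasDerivAt (a := 0) (b := v) (f' := hAux G)
    (f := fun u => -Real.log (cos u) - G * tan u) ?_ (hAux_int hG 0 v)
  · rw [this]; simp
  · intro u hu
    rw [Set.uIcc_of_le h0] at hu
    have hu2 : u < π / 2 := lt_of_le_of_lt (hu.2.trans h1) (arctan_lt_pi_div_two _)
    have hc : 0 < cos u := cos_pos_of_mem_Ioo ⟨by linarith [pi_pos, hu.1], hu2⟩
    have ht : tan u ≤ G⁻¹ := by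
      rw [← tan_arctan G⁻¹]
      exact strictMonoOn_tan.monotoneOn ⟨by linarith [pi_pos, hu.1], hu2⟩
        ⟨neg_pi_div_two_lt_arctan _, arctan_lt_pi_div_two _⟩ (hu.2.trans h1)
    rw [hAux_eq_pos hG (tan_nonneg_of_nonneg_of_le_pi_div_two hu.1 hu2.le) ht]
    have hd := (((hasDerivAt_cos u).log hc.ne').neg).sub ((hasDerivAt_tan hc.ne').const_mul G)
    refine HasDerivAt.congr_deriv (f := fun u => -Real.log (cos u) - G * tan u) hd ?_
    rw [tan_eq_sin_div_cos]
    field_simp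
    rw [cos_sq_add_sin_sq]; ring

lemma integral_second {G v : ℝ} (hG : 0 < G) (h0 : arctan G⁻¹ ≤ v) (h1 : v ≤ π) :
    ∫ u in (arctan G⁻¹)..v, hAux G u = -(G * (v - arctan G⁻¹)) := by
  have : ∫ u in (arctan G⁻¹)..v, hAux G u = ∫ u in (arctan G⁻¹)..v, (-G) := by
    apply intervalIntegral.integral_congr
    intro u hu
    rw [Set.uIcc_of_le h0] at hu
    apply hAux_eq_neg hG
    rcases lt_or_ge u (π / 2) with h | h
    · right
      rw [← tan_arctan G⁻¹]
      exact strictMonoOn_tan.monotoneOn ⟨neg_pi_div_two_lt_arctan _, arctan_lt_pi_div_two _⟩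
        ⟨lt_of_lt_of_le (neg_pi_div_two_lt_arctan _) hu.1, h⟩ hu.1
    · left
      rw [tan_eq_sin_div_cos]
      exact div_nonpos_of_nonneg_of_nonpos
        (sin_nonneg_of_nonneg_of_le_pi (by linarith [pi_pos]) (hu.2.trans h1))
        (cos_nonpos_of_pi_div_two_le_of_le h (by linarith [hu.2, pi_pos]))
  rw [this]; simp; ring

lemma integral_partial {v : ℝ} (h0 : 0 ≤ v) (h1 : v ≤ π) :
    ∫ u in (0:ℝ)..v, hAux optimalRate u ≤ additiveConst := by
  have hG := rate_pos
  have ha : 0 < arctan optimalRate⁻¹ := arctan_pos.2 (inv_pos.2 hG)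
  rcases le_total v (arctan optimalRate⁻¹) with h | h
  · rw [integral_first hG h0 h]
    exact le_const' ⟨h0, h.trans_lt (arctan_lt_pi_div_two _)⟩
  · rw [← intervalIntegral.integral_add_adjacent_intervals (hAux_int hG 0 (arctan optimalRate⁻¹))
      (hAux_int hG _ v), integral_first hG ha.le le_rfl, integral_second hG h h1]
    have := le_const (u := arctan optimalRate⁻¹) ⟨ha, arctan_lt_pi_div_two _⟩
    have := mul_nonneg hG.le (sub_nonneg.2 h)
    linarith

lemma integral_period : ∫ u in (0:ℝ)..π, hAux optimalRate u ≤ 0 := by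
  have hG := rate_pos
  have ha : 0 < arctan optimalRate⁻¹ := arctan_pos.2 (inv_pos.2 hG)
  have hb := arctan_lt_pi_div_two optimalRate⁻¹
  rw [← intervalIntegral.integral_add_adjacent_intervals (hAux_int hG 0 (arctan optimalRate⁻¹))
      (hAux_int hG _ π), integral_first hG ha.le le_rfl,
      integral_second hG (by linarith [pi_pos]) le_rfl]
  have := le_rate (x := 2 * arctan optimalRate⁻¹) ⟨by linarith, by linarith⟩
  rw [mul_div_cancel_left₀ _ (two_ne_zero)] at this
  linarith

lemma integral_all (n : ℕ) : ∀ v : ℝ, 0 ≤ v → v ≤ (n + 1) * π →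
    ∫ u in (0:ℝ)..v, hAux optimalRate u ≤ additiveConst := by
  induction n with
  | zero => intro v h0 h1; exact integral_partial h0 (by simpa using h1)
  | succ n ih =>
    intro v h0 h1
    rcases le_total v π with h | h
    · exact integral_partial h0 h
    · have hG := rate_pos
      rw [← intervalIntegral.integral_add_adjacent_intervals (hAux_int hG 0 π) (hAux_int hG π v)]
      have h2 : ∫ u in π..v, hAux optimalRate u = ∫ u in (0:ℝ)..(v - π), hAux optimalRate u := by
        have := intervalIntegral.integral_comp_add_right (a := 0) (b := v - π)
          (hAux optimalRate) π
        simp only [zero_add, sub_add_cancel] at this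
        rw [← this]
        congr 1; ext x; exact hAux_per _ x
      rw [h2]
      have := ih (v - π) (by linarith) (by push_cast at h1; linarith)
      linarith [integral_period]

/-- Theorem 3, upper bound: for every `Φ > 0` and every measurable
`f : [0,Φ] → ℝ` with `1/(2ω) ≤ f(φ)` and `2ω·f(φ)·cos²(φ/2) ≤ 1` a.e. on `[0,Φ]`,
such that `f` and `(2ω·f − 1)·cot(φ/2)` are integrable on `[0,Φ]`, the achieved
squeezing satisfies `∫₀^Φ (2ω·f − 1)·cot(φ/2)/2 dφ ≤ G·ω·∫₀^Φ f dφ + C`. -/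
theorem linear_in_time_squeezing_bound
    (ω : ℝ) (hω : 0 < ω) (Φ : ℝ) (hΦ : 0 < Φ) (f : ℝ → ℝ) (hf : Measurable f)
    (hbd : ∀ᵐ φ ∂(volume.restrict (Set.Icc 0 Φ)),
      1 / (2 * ω) ≤ f φ ∧ 2 * ω * f φ * Real.cos (φ / 2) ^ 2 ≤ 1)
    (hfi : IntegrableOn f (Set.Icc 0 Φ))
    (hri : IntegrableOn (fun φ => (2 * ω * f φ - 1) * Real.cot (φ / 2)) (Set.Icc 0 Φ)) :
    ∫ φ in (0:ℝ)..Φ, (2 * ω * f φ - 1) * (Real.cot (φ / 2) / 2)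
      ≤ optimalRate * ω * (∫ φ in (0:ℝ)..Φ, f φ) + additiveConst := by
  have hG := rate_pos
  have hri' : IntervalIntegrable (fun φ => (2 * ω * f φ - 1) * (Real.cot (φ / 2) / 2)) volume 0 Φ := by
    rw [intervalIntegrable_iff_integrableOn_Icc_of_le hΦ.le]
    have := Integrable.div_const hri 2
    refine this.congr (Filter.Eventually.of_forall fun x => ?_)
    simp only; ring
  have hfi' : IntervalIntegrable f volume 0 Φ := by
    rwa [intervalIntegrable_iff_integrableOn_Icc_of_le hΦ.le]
  have hhi : IntervalIntegrable (fun φ => hAux optimalRate (φ / 2) / 2) volume 0 Φ := by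
    have := (hAux_int hG 0 (Φ / 2)).comp_mul_left (c := 2⁻¹)
    simp only [div_inv_eq_mul, div_mul_cancel_of_invertible] at this
    refine IntervalIntegrable.div_const ?_ 2
    have h0 : (0:ℝ) * 2 = 0 := zero_mul 2
    rw [h0] at this
    refine IntervalIntegrable.congr (fun x _ => ?_) this
    show hAux optimalRate (2⁻¹ * x) = hAux optimalRate (x / 2)
    congr 1; ring
  have hcos : ∀ᵐ φ : ℝ ∂(volume.restrict (Set.Icc 0 Φ)), cos (φ / 2) ≠ 0 := by
    apply ae_restrict_of_ae
    have hcount : Set.Countable {φ : ℝ | cos (φ / 2) = 0} := by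
      refine (Set.countable_range (fun k : ℤ => (2 * k + 1) * π)).mono ?_
      intro φ hφ
      obtain ⟨k, hk⟩ := cos_eq_zero_iff.1 hφ
      exact ⟨k, by simp only; linarith⟩
    have := hcount.measure_zero volume
    rw [ae_iff]; simpa using this
  have key : ∫ φ in (0:ℝ)..Φ, ((2 * ω * f φ - 1) * (Real.cot (φ / 2) / 2) - optimalRate * ω * f φ)
      ≤ ∫ φ in (0:ℝ)..Φ, hAux optimalRate (φ / 2) / 2 := by
    refine intervalIntegral.integral_mono_ae_restrict hΦ.le (hri'.sub (hfi'.const_mul _)) hhi ?_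
    filter_upwards [hbd, hcos] with φ h hc
    obtain ⟨h1, h2⟩ := h
    have hg0 : 0 ≤ 2 * ω * f φ - 1 := by
      rw [div_le_iff₀ (by positivity)] at h1; linarith
    have hg1 : 2 * ω * f φ - 1 ≤ tan (φ / 2) ^ 2 := by
      have hc2 : 0 < cos (φ / 2) ^ 2 := by positivity
      have : tan (φ / 2) ^ 2 = 1 / cos (φ / 2) ^ 2 - 1 := by
        rw [tan_eq_sin_div_cos]; field_simp; linarith [sin_sq_add_cos_sq (φ / 2)]
      rw [this]
      have := (le_div_iff₀ hc2).2 h2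
      linarith
    have hcot : cot (φ / 2) = (tan (φ / 2))⁻¹ := by
      rw [cot_eq_cos_div_sin, tan_eq_sin_div_cos, inv_div]
    have e1 : (2 * ω * f φ - 1) * ((tan (φ / 2))⁻¹ - optimalRate) ≤
        tan (φ / 2) ^ 2 * max ((tan (φ / 2))⁻¹ - optimalRate) 0 :=
      (mul_le_mul_of_nonneg_left (le_max_left _ 0) hg0).trans
        (mul_le_mul_of_nonneg_right hg1 (le_max_right _ _))
    simp only [hAux, hcot]
    linarith
  rw [intervalIntegral.integral_sub hri' (hfi'.const_mul _),
    intervalIntegral.integral_const_mul] at key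
  have h3 : ∫ φ in (0:ℝ)..Φ, hAux optimalRate (φ / 2) / 2
      = ∫ u in (0:ℝ)..(Φ / 2), hAux optimalRate u := by
    rw [intervalIntegral.integral_div, intervalIntegral.integral_comp_div _ two_ne_zero]
    simp
  obtain ⟨n, hn⟩ := exists_nat_ge (Φ / 2 / π)
  have h4 := integral_all n (Φ / 2) (by linarith) (by
    rw [div_le_iff₀ pi_pos] at hn; linarith [pi_pos])
  linarith
end
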